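/- (Proposition: residue representation) With the zero-drift mostly symmetric setup and running assumptions ε = n^{-α}, δ = n^{-β} (1/2 < α < 2β, α + β > 1, 1/3 < β < 1/2), s_n = Σ_{w∈Γ} (2πi)^{-d} ∫_{N_w} [(1+z_1)···(1+z_{d-1}) / (B(ẑ) · z_1···z_d)] · [(B(ẑ) - z_d^2 A(ẑ)) / (1 - z_d)] · S̄(z)^n dz + O(S(1)^n e_n), where e_n → 0 faster than any fixed power of n. -/

import Mathlib

/-!
On a symmetric axis, steps `±1` come with equal weights, and the kernel
`K_p(z) = z ^ (1 - p) + ⋯ + z ^ p` vanishes at `p = 0`, has mean `1` over `|z| = 1` for `p ≥ 1`, and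
satisfies `K_{p+1} + K_{p-1} = (z + z⁻¹) K_p`. Integrating over the symmetric coordinates therefore
reduces the walks to walks on a half line with the complex step weights `A(ẑ)`, `Q(ẑ)`, `B(ẑ)`.
These are handled by a similar kernel on `|z| = 1 - ε`, whose recursion has the ratio `A / B` in it.
This gives the residue integrand; where `B` is small it is replaced by the half-line weight itself,
which has the same mean over the circle. So `s_n` is *exactly* the mean of a bounded function over
the torus, and it remains to see that the part of the torus outside of the boxes `N_w` is
negligible.

Where `|B|` is less than half of its maximal value `B(1)`, the half-line weight is at most
`(S(1) - B(1) / 2) ^ n`. Elsewhere `|S̄|` is at most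
`S̄(1, …, 1, 1 - ε) ≤ S(1) + 2 B(1) ε ^ 2`, since `B(1) ≤ A(1)`, and if two steps have phases which
differ by `η` it is smaller by a multiple of `η ^ 2`. If all the phases agree up to `δ / (d + 1)`,
then comparing a step with its reflections puts every symmetric angle close to a multiple of `π`,
and the last angle close to a multiple of `π / 2`; at the point of these multiples the phases agree
exactly, being multiples of `π / 2`, so that the point belongs to `Γ`. Outside of the boxes, then,
`|S̄| ^ n ≤ S(1) ^ n exp (n (C ε ^ 2 - c δ ^ 2))`, and for `ε = n ^ (-α)`, `δ = n ^ (-β)` with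
`β < α` and `β < 1 / 2` this is superpolynomially smaller than `S(1) ^ n`.
-/

open Finset Filter MeasureTheory
open scoped Classical Real

noncomputable section

/-- Total weight of walks of length `n` with steps in `S` (weighted by `w`),
starting at the origin and never leaving `ℕ^d`. -/
def walkWeight (d : ℕ) (S : Finset (Fin d → ℤ)) (w : (Fin d → ℤ) → ℝ) (n : ℕ) : ℝ :=
  ∑ f : Fin n → {i // i ∈ S},
    if ∀ m : ℕ, m ≤ n → ∀ j : Fin d,
        0 ≤ ∑ k ∈ Finset.univ.filter (fun k : Fin n => (k : ℕ) < m), ((f k : Fin d → ℤ) j)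
    then ∏ k : Fin n, w (f k) else 0

/-- The step set `S` (with weights `w`) is symmetric over the `k`-th coordinate axis. -/
def SymmetricAxis (d : ℕ) (S : Finset (Fin d → ℤ)) (w : (Fin d → ℤ) → ℝ) (k : Fin d) : Prop :=
  ∀ i ∈ S, Function.update i k (-(i k)) ∈ S ∧ w (Function.update i k (-(i k))) = w i

namespace ZeroDrift

variable (d : ℕ) (S : Finset (Fin (d + 1) → ℤ)) (w : (Fin (d + 1) → ℤ) → ℝ)

/-- `S(1)`, the total weight of the step set. -/
def S1 : ℝ := ∑ i ∈ S, w i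

/-- `A(ẑ)`: the Laurent polynomial collecting steps with last coordinate `-1`. -/
def AC (z : Fin (d + 1) → ℂ) : ℂ :=
  ∑ i ∈ S.filter fun i => i (Fin.last d) = -1,
    (w i : ℂ) * ∏ j : Fin d, z (Fin.castSucc j) ^ (i (Fin.castSucc j))

/-- `B(ẑ)`: the Laurent polynomial collecting steps with last coordinate `1`. -/
def BC (z : Fin (d + 1) → ℂ) : ℂ :=
  ∑ i ∈ S.filter fun i => i (Fin.last d) = 1,
    (w i : ℂ) * ∏ j : Fin d, z (Fin.castSucc j) ^ (i (Fin.castSucc j))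

/-- `Q(ẑ)`: the Laurent polynomial collecting steps with last coordinate `0`. -/
def QC (z : Fin (d + 1) → ℂ) : ℂ :=
  ∑ i ∈ S.filter fun i => i (Fin.last d) = 0,
    (w i : ℂ) * ∏ j : Fin d, z (Fin.castSucc j) ^ (i (Fin.castSucc j))

/-- The characteristic Laurent polynomial `S(z)` evaluated at `z : ℂ^{d+1}`. -/
def SC (z : Fin (d + 1) → ℂ) : ℂ :=
  ∑ i ∈ S, (w i : ℂ) * ∏ j : Fin (d + 1), z j ^ (i j)

/-- `S̄(z) = S(z_1,…,z_{d},1/z_{d+1})` evaluated at `z : ℂ^{d+1}`. -/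
def SbarC (z : Fin (d + 1) → ℂ) : ℂ :=
  ∑ i ∈ S, (w i : ℂ) *
    (∏ j : Fin d, z (Fin.castSucc j) ^ (i (Fin.castSucc j))) *
    z (Fin.last d) ^ (-(i (Fin.last d)))

/-- The numerator `G(z,t)` of the diagonal representation. -/
def GC (z : Fin (d + 1) → ℂ) (t : ℂ) : ℂ :=
  (∏ j : Fin d, (1 + z (Fin.castSucc j))) *
    (1 - t * (∏ j, z j) * (QC d S w z + 2 * z (Fin.last d) * AC d S w z))

/-- The denominator `H(z,t) = H_1 H_2 H_3` of the diagonal representation. -/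
def HC (z : Fin (d + 1) → ℂ) (t : ℂ) : ℂ :=
  (1 - z (Fin.last d)) * (1 - t * (∏ j, z j) * SbarC d S w z) *
    (1 - t * (∏ j, z j) * (QC d S w z + z (Fin.last d) * AC d S w z))

/-- The point of `ℂ^{d+1}` with coordinates `i^{m_j}` encoded by `m : Fin (d+1) → Fin 4`. -/
def wOf (m : Fin (d + 1) → Fin 4) : Fin (d + 1) → ℂ :=
  fun j => Complex.I ^ (m j : ℕ)

/-- The (indices of the) finite set `Γ` of possible contributing points: `w_j ∈ {±1}` for
`j ≤ d`, `w_{d+1} ∈ {±1,±i}`, and `|1/(w_1⋯w_{d+1} S(w))| = 1/S(1)`. -/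
def GammaIdx : Finset (Fin (d + 1) → Fin 4) :=
  Finset.univ.filter fun m =>
    (∀ j : Fin d, m (Fin.castSucc j) = 0 ∨ m (Fin.castSucc j) = 2) ∧
    ‖1 / ((∏ j, wOf d m j) * SC d S w (wOf d m))‖ = 1 / S1 d S w

/-- The argument (angle) of the point encoded by `m` in coordinate `j`. -/
def argOf (m : Fin (d + 1) → Fin 4) (j : Fin (d + 1)) : ℝ := (m j : ℕ) * π / 2

/-- The box of angles parametrizing the product of arcs `N_w` for `w = wOf m`. -/
def box (m : Fin (d + 1) → Fin 4) (δ : ℝ) : Set (Fin (d + 1) → ℝ) :=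
  Set.univ.pi fun j => Set.Ioo (argOf d m j - δ) (argOf d m j + δ)

/-- The parametrization of the torus `|z_j| = 1` (`j ≤ d`), `|z_{d+1}| = 1 - ε`. -/
def zOf (ε : ℝ) (θ : Fin (d + 1) → ℝ) : Fin (d + 1) → ℂ :=
  fun j => (if j = Fin.last d then (1 - ε : ℂ) else 1) * Complex.exp (Complex.I * θ j)

/-- Angles parametrizing `N = ⋃_{w ∈ Γ} N_w`. -/
def Nparam (δ : ℝ) : Set (Fin (d + 1) → ℝ) := ⋃ m ∈ GammaIdx d S w, box d m δ

/-- The contour integral `(2πi)^{-(d+2)} ∫_{N × C} G/H · dz dt/(z_1⋯z_{d+1}t)^{n+1}`,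
parametrized by angles, where `C` is the circle `|t| = r`. -/
def fullIntegral (n : ℕ) (ε δ r : ℝ) : ℂ :=
  (((2 * π) ^ (d + 2) : ℝ))⁻¹ •
    ∫ θ in Nparam d S w δ,
      ∫ φ in Set.Ioo 0 (2 * π),
        GC d S w (zOf d ε θ) ((r : ℂ) * Complex.exp (Complex.I * φ)) /
            HC d S w (zOf d ε θ) ((r : ℂ) * Complex.exp (Complex.I * φ)) *
          (((∏ j, zOf d ε θ j) * ((r : ℂ) * Complex.exp (Complex.I * φ))) ^ n)⁻¹

/-- The residue integrand
`[(1+z_1)⋯(1+z_d)/(B(ẑ) z_1⋯z_{d+1})]·[(B(ẑ) - z_{d+1}^2 A(ẑ))/(1-z_{d+1})]·S̄(z)^n`,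
parametrized by angles, including the Jacobian factors `i z_j` of `dz_j`. -/
def resIntegrand (n : ℕ) (ε : ℝ) (θ : Fin (d + 1) → ℝ) : ℂ :=
  ((∏ j : Fin d, (1 + zOf d ε θ (Fin.castSucc j))) /
      (BC d S w (zOf d ε θ) * ∏ j, zOf d ε θ j)) *
    ((BC d S w (zOf d ε θ) - zOf d ε θ (Fin.last d) ^ 2 * AC d S w (zOf d ε θ)) /
      (1 - zOf d ε θ (Fin.last d))) *
    SbarC d S w (zOf d ε θ) ^ n *
    ∏ j, Complex.I * zOf d ε θ j

/-- The contour integral `∫_{N_w} (residue integrand) dz` over the product of arcs `N_w`,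
`w = wOf m`, parametrized by angles. -/
def resIntegral (n : ℕ) (ε δ : ℝ) (m : Fin (d + 1) → Fin 4) : ℂ :=
  ∫ θ in box d m δ, resIntegrand d S w n ε θ

end ZeroDrift

namespace ZeroDrift

/-- Step sets contained in `{-1, 0, 1}^D`. -/
def SmallSteps {D : ℕ} (S : Finset (Fin D → ℤ)) : Prop :=
  ∀ i ∈ S, ∀ j, i j = -1 ∨ i j = 0 ∨ i j = 1

section Walks

variable {D : ℕ} {S : Finset (Fin D → ℤ)} {w : (Fin D → ℤ) → ℝ}

/-- The position, after `m` steps, of the walk which starts at `x` and takes the steps `f`. -/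
def position (x : Fin D → ℤ) {n : ℕ} (f : Fin n → {i // i ∈ S}) (m : ℕ) : Fin D → ℤ :=
  x + ∑ k ∈ univ.filter fun k : Fin n => (k : ℕ) < m, (f k : Fin D → ℤ)

/-- The analogue of `walkWeight` for walks which start at the point `x`. -/
def walkWeightFrom (S : Finset (Fin D → ℤ)) (w : (Fin D → ℤ) → ℝ) (n : ℕ) (x : Fin D → ℤ) : ℝ :=
  ∑ f : Fin n → {i // i ∈ S}, if ∀ m ≤ n, 0 ≤ position x f m then ∏ k, w (f k) else 0

lemma walkWeightFrom_origin (n : ℕ) : walkWeightFrom S w n 0 = walkWeight D S w n := by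
  simp only [walkWeightFrom, walkWeight, position, zero_add, Pi.le_def, Pi.zero_apply,
    Finset.sum_apply]

lemma position_zero (x : Fin D → ℤ) {n : ℕ} (f : Fin n → {i // i ∈ S}) : position x f 0 = x := by
  simp [position]

lemma position_cons_succ (x : Fin D → ℤ) {n : ℕ} (i : {i // i ∈ S}) (f : Fin n → {i // i ∈ S})
    (m : ℕ) : position x (Fin.cons i f : Fin (n + 1) → {i // i ∈ S}) (m + 1) =
      position (x + (i : Fin D → ℤ)) f m := by
  simp [position, Finset.sum_filter, Fin.sum_univ_succ, add_assoc]

lemma walkWeightFrom_of_not_nonneg (n : ℕ) {x : Fin D → ℤ} (hx : ¬ 0 ≤ x) :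
    walkWeightFrom S w n x = 0 :=
  Finset.sum_eq_zero fun f _ => if_neg fun h => hx (position_zero x f ▸ h 0 n.zero_le)

lemma walkWeightFrom_zero {x : Fin D → ℤ} (hx : 0 ≤ x) : walkWeightFrom S w 0 x = 1 := by
  simp [walkWeightFrom, position_zero, hx]

lemma walkWeightFrom_succ (n : ℕ) {x : Fin D → ℤ} (hx : 0 ≤ x) :
    walkWeightFrom S w (n + 1) x = ∑ i ∈ S, w i * walkWeightFrom S w n (x + i) := by
  rw [walkWeightFrom, ← (Fin.consEquiv fun _ : Fin (n + 1) => {i // i ∈ S}).sum_comp,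
    Fintype.sum_prod_type, ← Finset.sum_coe_sort S]
  refine Finset.sum_congr rfl fun i _ => ?_
  rw [walkWeightFrom, Finset.mul_sum]
  refine Finset.sum_congr rfl fun f _ => ?_
  have confined_iff : (∀ m ≤ n + 1, 0 ≤ position x (Fin.cons i f : Fin (n + 1) → {i // i ∈ S}) m) ↔
      ∀ m ≤ n, 0 ≤ position (x + (i : Fin D → ℤ)) f m := by
    simp only [← position_cons_succ]
    refine ⟨fun h m hm => h _ (by lia), fun h m hm => ?_⟩
    cases m with
    | zero => rwa [position_zero]
    | succ m => exact h m (by lia)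
  rw [mul_ite, mul_zero]
  exact if_congr confined_iff (by simp [Fin.prod_univ_succ]) rfl

lemma sum_weight_mul_comp_reflection {k : Fin D} (hk : SymmetricAxis D S w k)
    (f : (Fin D → ℤ) → ℂ) :
    ∑ i ∈ S, (w i : ℂ) * f (Function.update i k (-i k)) = ∑ i ∈ S, (w i : ℂ) * f i := by
  refine Finset.sum_nbij' (fun i => Function.update i k (-i k))
    (fun i => Function.update i k (-i k)) (fun i hi => (hk i hi).1) (fun i hi => (hk i hi).1)
    (fun i _ => by simp) (fun i _ => by simp) fun i hi => by rw [(hk i hi).2]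

lemma sum_weight_mul_prod_update {k : Fin D} (hk : SymmetricAxis D S w k) (F : Fin D → ℤ → ℂ)
    (g : ℤ → ℂ) (h : ∀ i ∈ S, F k (i k) + F k (-i k) = g (i k) + g (-i k)) :
    ∑ i ∈ S, (w i : ℂ) * ∏ j, F j (i j) =
      ∑ i ∈ S, (w i : ℂ) * ∏ j, Function.update F k g j (i j) := by
  set others : (Fin D → ℤ) → ℂ := fun i => ∏ j ∈ univ.erase k, F j (i j)
  have symmetrize (f : ℤ → ℂ) : 2 * ∑ i ∈ S, (w i : ℂ) * (f (i k) * others i) =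
      ∑ i ∈ S, (w i : ℂ) * ((f (i k) + f (-i k)) * others i) := by
    have others_reflection (i : Fin D → ℤ) : others (Function.update i k (-i k)) = others i :=
      Finset.prod_congr rfl fun j hj => by rw [Function.update_of_ne (Finset.ne_of_mem_erase hj)]
    have := sum_weight_mul_comp_reflection hk fun i => f (i k) * others i
    simp only [others_reflection, Function.update_self] at this
    rw [two_mul]
    nth_rw 2 [← this]
    rw [← Finset.sum_add_distrib]
    exact Finset.sum_congr rfl fun i _ => by ring
  have prod_eq (i : Fin D → ℤ) : ∏ j, F j (i j) = F k (i k) * others i :=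
    (Finset.mul_prod_erase _ _ (Finset.mem_univ k)).symm
  have prod_update_eq (i : Fin D → ℤ) :
      ∏ j, Function.update F k g j (i j) = g (i k) * others i := by
    rw [← Finset.mul_prod_erase _ _ (Finset.mem_univ k), Function.update_self]
    congr 1
    exact Finset.prod_congr rfl fun j hj => by
      rw [Function.update_of_ne (Finset.ne_of_mem_erase hj)]
  simp only [prod_eq, prod_update_eq]
  refine mul_left_cancel₀ (two_ne_zero (α := ℂ)) ?_
  rw [symmetrize, symmetrize]
  exact Finset.sum_congr rfl fun i hi => by rw [h i hi]

lemma sum_weight_mul_prod_congr (F G : Fin D → ℤ → ℂ)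
    (h : ∀ k, F k = G k ∨
      SymmetricAxis D S w k ∧ ∀ i ∈ S, F k (i k) + F k (-i k) = G k (i k) + G k (-i k)) :
    ∑ i ∈ S, (w i : ℂ) * ∏ j, F j (i j) = ∑ i ∈ S, (w i : ℂ) * ∏ j, G j (i j) := by
  suffices ∀ T : Finset (Fin D), ∑ i ∈ S, (w i : ℂ) * ∏ j, F j (i j) =
      ∑ i ∈ S, (w i : ℂ) * ∏ j, T.piecewise G F j (i j) by
    simpa using this univ
  intro T
  induction T using Finset.induction_on with
  | empty => simp
  | insert k T hkT ih =>
    have piecewise_k : T.piecewise G F k = F k := Finset.piecewise_eq_of_notMem _ _ _ hkT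
    rw [ih, Finset.piecewise_insert]
    rcases h k with hk | ⟨hk, hFG⟩
    · rw [← hk, ← piecewise_k, Function.update_eq_self]
    · exact sum_weight_mul_prod_update hk _ _ fun i hi => by rw [piecewise_k, hFG i hi]

end Walks

section Kernel

/-- For fixed `z`, an eigenfunction, with eigenvalue `z + z⁻¹`, of the operator
`f ↦ f (· + 1) + f (· - 1)` on functions which vanish at `0`; its mean over `|z| = 1` is `1` at
every `p ≥ 1`. -/
def reflectionKernel (p : ℤ) (z : ℂ) : ℂ := ∑ k ∈ Finset.Ioc (-p) p, z ^ k

lemma reflectionKernel_zero (z : ℂ) : reflectionKernel 0 z = 0 := by simp [reflectionKernel]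

lemma reflectionKernel_one (z : ℂ) : reflectionKernel 1 z = 1 + z := by
  have : Finset.Ioc (-1 : ℤ) 1 = {0, 1} := by decide
  simp [reflectionKernel, this]

lemma mul_reflectionKernel {z : ℂ} (hz : z ≠ 0) (p : ℤ) :
    z * reflectionKernel p z = ∑ k ∈ Finset.Ioc (-p + 1) (p + 1), z ^ k := by
  rw [reflectionKernel, Finset.mul_sum, ← Finset.map_add_right_Ioc, Finset.sum_map]
  exact Finset.sum_congr rfl fun k _ => by simp [zpow_add_one₀ hz, mul_comm]

lemma inv_mul_reflectionKernel {z : ℂ} (hz : z ≠ 0) (p : ℤ) :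
    z⁻¹ * reflectionKernel p z = ∑ k ∈ Finset.Ioc (-p - 1) (p - 1), z ^ k := by
  rw [reflectionKernel, Finset.mul_sum, sub_eq_add_neg, sub_eq_add_neg, ← Finset.map_add_right_Ioc,
    Finset.sum_map]
  exact Finset.sum_congr rfl fun k _ => by
    simp [← sub_eq_add_neg, zpow_sub_one₀ hz, mul_comm]

lemma reflectionKernel_add_one_add_sub_one {z : ℂ} (hz : z ≠ 0) {p : ℤ} (hp : 1 ≤ p) :
    reflectionKernel (p + 1) z + reflectionKernel (p - 1) z = (z + z⁻¹) * reflectionKernel p z := by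
  have split {a b c : ℤ} (hab : a ≤ b) (hbc : b ≤ c) : ∑ k ∈ Finset.Ioc a c, z ^ k =
      ∑ k ∈ Finset.Ioc a b, z ^ k + ∑ k ∈ Finset.Ioc b c, z ^ k := by
    rw [← Finset.sum_union (Finset.Ioc_disjoint_Ioc_of_le le_rfl),
      Finset.Ioc_union_Ioc_eq_Ioc hab hbc]
  rw [add_mul, mul_reflectionKernel hz, inv_mul_reflectionKernel hz, reflectionKernel,
    reflectionKernel, neg_add', neg_sub, sub_eq_neg_add 1 p,
    split (a := -p - 1) (b := -p + 1) (c := p + 1) (by lia) (by lia),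
    split (a := -p - 1) (b := -p + 1) (c := p - 1) (by lia) (by lia)]
  ring

end Kernel

section Circle

open Metric Real

lemma circleAverage_zpow {r : ℝ} (hr : 0 < r) (m : ℤ) :
    circleAverage (fun z => z ^ m) 0 r = if m = 0 then 1 else 0 := by
  split_ifs with hm
  · simp [hm, circleAverage_const]
  · have integrand_eq : Set.EqOn (fun z : ℂ => (z - 0)⁻¹ • z ^ m) (fun z => (z - 0) ^ (m - 1))
        (sphere 0 r) := fun z hz => by
      have : z ≠ 0 := ne_of_mem_sphere hz hr.ne'
      simp [zpow_sub_one₀ this, mul_comm]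
    rw [circleAverage_eq_circleIntegral hr.ne', circleIntegral.integral_congr hr.le integrand_eq,
      circleIntegral.integral_sub_zpow_of_ne (by lia), smul_zero]

lemma circleAverage_reflectionKernel {p : ℤ} (hp : 1 ≤ p) :
    circleAverage (reflectionKernel p) 0 1 = 1 := by
  have integrable (k : ℤ) : CircleIntegrable (fun z : ℂ => z ^ k) 0 1 := by
    refine ContinuousOn.circleIntegrable zero_le_one fun z hz => ?_
    exact (continuousAt_zpow₀ z k (.inl (ne_of_mem_sphere hz one_ne_zero))).continuousWithinAt
  have : reflectionKernel p = fun z => ∑ k ∈ Finset.Ioc (-p) p, z ^ k := rfl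
  rw [this, circleAverage_fun_sum fun k _ => integrable k]
  simp only [circleAverage_zpow one_pos]
  rw [Finset.sum_ite_eq_of_mem' _ _ _ (by simp; lia)]

end Circle

section HalfLine

open Metric Real

/-- Total weight of the `n`-step walks on `ℕ` which start at `k`, where the steps `-1`, `0`, `1`
have weights `a`, `q`, `b`. -/
def halfLineWeight (a q b : ℂ) : ℕ → ℤ → ℂ
  | 0, k => if 0 ≤ k then 1 else 0
  | n + 1, k => if 0 ≤ k then
      a * halfLineWeight a q b n (k - 1) + q * halfLineWeight a q b n k +
        b * halfLineWeight a q b n (k + 1)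
    else 0

lemma halfLineWeight_of_neg (a q b : ℂ) (n : ℕ) {k : ℤ} (hk : k < 0) :
    halfLineWeight a q b n k = 0 := by
  cases n <;> simp [halfLineWeight, hk]

lemma halfLineWeight_succ (a q b : ℂ) (n : ℕ) {k : ℤ} (hk : 0 ≤ k) :
    halfLineWeight a q b (n + 1) k = a * halfLineWeight a q b n (k - 1) +
      q * halfLineWeight a q b n k + b * halfLineWeight a q b n (k + 1) := by
  simp [halfLineWeight, hk]

lemma norm_halfLineWeight_le (a q b : ℂ) (n : ℕ) (k : ℤ) :
    ‖halfLineWeight a q b n k‖ ≤ (‖a‖ + ‖q‖ + ‖b‖) ^ n := by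
  induction n generalizing k with
  | zero => by_cases h : 0 ≤ k <;> simp [halfLineWeight, h]
  | succ n ih =>
    rcases lt_or_ge k 0 with hk | hk
    · rw [halfLineWeight_of_neg a q b _ hk, norm_zero]
      positivity
    · calc ‖halfLineWeight a q b (n + 1) k‖
          ≤ ‖a‖ * ‖halfLineWeight a q b n (k - 1)‖ + ‖q‖ * ‖halfLineWeight a q b n k‖ +
              ‖b‖ * ‖halfLineWeight a q b n (k + 1)‖ := by
            rw [halfLineWeight_succ a q b n hk]
            simp only [← norm_mul]
            exact norm_add₃_le
        _ ≤ ‖a‖ * (‖a‖ + ‖q‖ + ‖b‖) ^ n + ‖q‖ * (‖a‖ + ‖q‖ + ‖b‖) ^ n +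
              ‖b‖ * (‖a‖ + ‖q‖ + ‖b‖) ^ n := by gcongr <;> apply ih
        _ = (‖a‖ + ‖q‖ + ‖b‖) ^ (n + 1) := by ring

lemma continuous_halfLineWeight {X : Type*} [TopologicalSpace X] {a q b : X → ℂ} (ha : Continuous a)
    (hq : Continuous q) (hb : Continuous b) (n : ℕ) (k : ℤ) :
    Continuous fun x => halfLineWeight (a x) (q x) (b x) n k := by
  induction n generalizing k with
  | zero => exact continuous_const
  | succ n ih =>
    simp only [halfLineWeight]
    split_ifs
    exacts [((ha.mul (ih _)).add (hq.mul (ih _))).add (hb.mul (ih _)), continuous_const]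

/-- The analogue of `reflectionKernel` for the half-line walks with `c = a / b`: it vanishes at
`p = 0`, satisfies `a K (p - 1) + b K (p + 1) = (a z + b z⁻¹) K p`, and has mean `1` over
`|z| = r < 1` at every `p ≥ 1`. -/
def halfLineKernel (c : ℂ) (p : ℕ) (z : ℂ) : ℂ := z * (z⁻¹ ^ p - c ^ p * z ^ p) / (1 - z)

lemma halfLineKernel_zero (c z : ℂ) : halfLineKernel c 0 z = 0 := by simp [halfLineKernel]

lemma halfLineKernel_mul_add_two {a b z : ℂ} (hb : b ≠ 0) (hz : z ≠ 0) (p : ℕ) :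
    halfLineKernel (a / b) (p + 1) z * (a * z + b * z⁻¹) =
      a * halfLineKernel (a / b) p z + b * halfLineKernel (a / b) (p + 2) z := by
  simp only [halfLineKernel, pow_succ]
  field_simp
  ring

lemma one_sub_ne_zero_of_mem_sphere {r : ℝ} (h1 : r < 1) :
    ∀ z ∈ sphere (0 : ℂ) r, 1 - z ≠ 0 := by
  rintro z hz h
  rw [← sub_eq_zero.1 h, mem_sphere_zero_iff_norm, norm_one] at hz
  exact h1.ne' hz

lemma continuousOn_halfLineKernel {r : ℝ} (h0 : 0 < r) (h1 : r < 1) (c : ℂ) (p : ℕ) :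
    ContinuousOn (halfLineKernel c p) (sphere 0 r) := by
  have hz : ∀ z ∈ sphere (0 : ℂ) r, z ≠ 0 := fun z hz => ne_of_mem_sphere hz h0.ne'
  have hz1 := one_sub_ne_zero_of_mem_sphere h1
  unfold halfLineKernel
  fun_prop (disch := assumption)

lemma circleAverage_div_one_sub {r : ℝ} (h0 : 0 < r) (h1 : r < 1) {f : ℂ → ℂ}
    (hf : Differentiable ℂ f) : circleAverage (fun z => f z / (1 - z)) 0 r = f 0 := by
  have : DiffContOnCl ℂ (fun z : ℂ => f z / (1 - z)) (ball 0 |r|) := by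
    refine DifferentiableOn.diffContOnCl fun z hz => DifferentiableAt.differentiableWithinAt ?_
    have hzr : ‖z‖ ≤ r := by
      simpa [abs_of_pos h0] using closure_ball_subset_closedBall hz
    have hz1 : 1 - z ≠ 0 := by
      rintro h
      rw [← sub_eq_zero.1 h, norm_one] at hzr
      linarith
    exact hf.differentiableAt.fun_div (by fun_prop) hz1
  simpa using this.circleAverage

lemma circleIntegrable_inv_pow_div_one_sub {r : ℝ} (h0 : 0 < r) (h1 : r < 1) (p : ℕ) :
    CircleIntegrable (fun z : ℂ => z⁻¹ ^ p / (1 - z)) 0 r := by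
  have hz : ∀ z ∈ sphere (0 : ℂ) r, z ≠ 0 := fun z hz => ne_of_mem_sphere hz h0.ne'
  have hz1 := one_sub_ne_zero_of_mem_sphere h1
  exact ContinuousOn.circleIntegrable h0.le (by fun_prop (disch := assumption))

lemma circleAverage_inv_pow_div_one_sub {r : ℝ} (h0 : 0 < r) (h1 : r < 1) (p : ℕ) :
    circleAverage (fun z : ℂ => z⁻¹ ^ p / (1 - z)) 0 r = 1 := by
  induction p with
  | zero => simpa using circleAverage_div_one_sub h0 h1 (differentiable_const (1 : ℂ))
  | succ p ih =>
    have hz : ∀ z ∈ sphere (0 : ℂ) r, z ≠ 0 := fun z hz => ne_of_mem_sphere hz h0.ne'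
    have split : Set.EqOn (fun z : ℂ => z⁻¹ ^ (p + 1) / (1 - z))
        (fun z => z ^ (-(p + 1 : ℤ)) + z⁻¹ ^ p / (1 - z)) (sphere 0 |r|) := fun z hz' => by
      rw [abs_of_pos h0] at hz'
      have := hz z hz'
      have := one_sub_ne_zero_of_mem_sphere h1 z hz'
      simp only [zpow_neg, inv_pow]
      norm_cast
      field_simp
      ring
    have integrable : CircleIntegrable (fun z : ℂ => z ^ (-(p + 1 : ℤ))) 0 r :=
      ContinuousOn.circleIntegrable h0.le fun z hz' =>
        (continuousAt_zpow₀ z _ (.inl (hz z hz'))).continuousWithinAt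
    rw [circleAverage_congr_sphere split, circleAverage_fun_add integrable
      (circleIntegrable_inv_pow_div_one_sub h0 h1 p), ih, circleAverage_zpow h0,
      if_neg (by lia), zero_add]

lemma circleAverage_halfLineKernel {r : ℝ} (h0 : 0 < r) (h1 : r < 1) (c : ℂ) (p : ℕ) :
    circleAverage (halfLineKernel c (p + 1)) 0 r = 1 := by
  have hz : ∀ z ∈ sphere (0 : ℂ) r, z ≠ 0 := fun z hz => ne_of_mem_sphere hz h0.ne'
  have hz1 := one_sub_ne_zero_of_mem_sphere h1
  have split : Set.EqOn (halfLineKernel c (p + 1))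
      (fun z => z⁻¹ ^ p / (1 - z) - c ^ (p + 1) * z ^ (p + 2) / (1 - z)) (sphere 0 |r|) := by
    intro z hz'
    have := hz z (abs_of_pos h0 ▸ hz')
    simp only [halfLineKernel, inv_pow]
    field_simp
    ring
  rw [circleAverage_congr_sphere split, circleAverage_fun_sub
    (circleIntegrable_inv_pow_div_one_sub h0 h1 p)
    (ContinuousOn.circleIntegrable h0.le (by fun_prop (disch := assumption))),
    circleAverage_inv_pow_div_one_sub h0 h1, circleAverage_div_one_sub h0 h1 (by fun_prop)]
  simp

lemma circleAverage_halfLineKernel_mul_pow {r : ℝ} (h0 : 0 < r) (h1 : r < 1) (a q : ℂ) {b : ℂ}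
    (hb : b ≠ 0) (n p : ℕ) :
    circleAverage (fun z => halfLineKernel (a / b) p z * (q + a * z + b * z⁻¹) ^ n) 0 r =
      halfLineWeight a q b n (p - 1) := by
  induction n generalizing p with
  | zero =>
    cases p with
    | zero => simp [halfLineKernel_zero, halfLineWeight, circleAverage_const]
    | succ p => simpa [halfLineWeight] using circleAverage_halfLineKernel h0 h1 _ p
  | succ n ih =>
    cases p with
    | zero => simp [halfLineKernel_zero, halfLineWeight, circleAverage_const]
    | succ p =>
      set term : ℕ → ℂ → ℂ := fun p z => halfLineKernel (a / b) p z * (q + a * z + b * z⁻¹) ^ n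
      have integrable (p : ℕ) (s : ℂ) : CircleIntegrable (s • term p) 0 r := by
        have := continuousOn_halfLineKernel h0 h1 (a / b) p
        have hz : ∀ z ∈ sphere (0 : ℂ) r, z ≠ 0 := fun z hz => ne_of_mem_sphere hz h0.ne'
        exact ContinuousOn.circleIntegrable h0.le (by fun_prop (disch := assumption))
      have expand : Set.EqOn
          (fun z => halfLineKernel (a / b) (p + 1) z * (q + a * z + b * z⁻¹) ^ (n + 1))
          (a • term p + q • term (p + 1) + b • term (p + 2)) (sphere 0 |r|) := by
        intro z hz
        have := halfLineKernel_mul_add_two (a := a) hb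
          (ne_of_mem_sphere hz (abs_ne_zero.2 h0.ne')) p
        simp only [term, smul_eq_mul, Pi.add_apply, Pi.smul_apply]
        linear_combination (q + a * z + b * z⁻¹) ^ n * this
      rw [circleAverage_congr_sphere expand, circleAverage_add
        ((integrable _ _).add (integrable _ _)) (integrable _ _), circleAverage_add
        (integrable _ _) (integrable _ _), circleAverage_smul, circleAverage_smul,
        circleAverage_smul, ih, ih, ih, halfLineWeight_succ _ _ _ _ (by simp)]
      push_cast
      simp only [smul_eq_mul]
      ring_nf

end HalfLine

section Levels

variable {d : ℕ} {S : Finset (Fin (d + 1) → ℤ)} {w : (Fin (d + 1) → ℤ) → ℝ}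

/-- The Laurent polynomial in the first `d` variables which collects the steps with last coordinate
`m`, so that `AC`, `QC` and `BC` are the cases `m = -1, 0, 1`. -/
def levelSum (S : Finset (Fin (d + 1) → ℤ)) (w : (Fin (d + 1) → ℤ) → ℝ) (m : ℤ)
    (u : Fin d → ℂ) : ℂ :=
  ∑ i ∈ S.filter fun i => i (Fin.last d) = m, (w i : ℂ) * ∏ j, u j ^ i j.castSucc

/-- The total weight of the steps with last coordinate `m`. -/
def levelWeight (S : Finset (Fin (d + 1) → ℤ)) (w : (Fin (d + 1) → ℤ) → ℝ) (m : ℤ) : ℝ :=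
  ∑ i ∈ S.filter fun i => i (Fin.last d) = m, w i

lemma sum_mul_last {R : Type*} [NonUnitalNonAssocSemiring R] (hS : SmallSteps S)
    (f : (Fin (d + 1) → ℤ) → R) (g : ℤ → R) :
    ∑ i ∈ S, f i * g (i (Fin.last d)) =
      (∑ i ∈ S.filter fun i => i (Fin.last d) = -1, f i) * g (-1) +
      (∑ i ∈ S.filter fun i => i (Fin.last d) = 0, f i) * g 0 +
      (∑ i ∈ S.filter fun i => i (Fin.last d) = 1, f i) * g 1 := by
  simp only [Finset.sum_filter, Finset.sum_mul, ← Finset.sum_add_distrib]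
  refine Finset.sum_congr rfl fun i hi => ?_
  rcases hS i hi (Fin.last d) with h | h | h <;> simp [h]

lemma sum_weight_mul_prod_mul_last (hS : SmallSteps S) (u : Fin d → ℂ) (g : ℤ → ℂ) :
    ∑ i ∈ S, (w i : ℂ) * (∏ j, u j ^ i j.castSucc) * g (i (Fin.last d)) =
      levelSum S w (-1) u * g (-1) + levelSum S w 0 u * g 0 + levelSum S w 1 u * g 1 :=
  sum_mul_last hS _ g

lemma levelWeight_nonneg (hw : ∀ i ∈ S, 0 < w i) (m : ℤ) : 0 ≤ levelWeight S w m :=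
  Finset.sum_nonneg fun i hi => (hw i (Finset.mem_of_mem_filter i hi)).le

lemma levelWeight_pos (hw : ∀ i ∈ S, 0 < w i) {i : Fin (d + 1) → ℤ} (hi : i ∈ S) :
    0 < levelWeight S w (i (Fin.last d)) :=
  Finset.sum_pos (fun k hk => hw k (Finset.mem_of_mem_filter k hk))
    ⟨i, Finset.mem_filter.2 ⟨hi, rfl⟩⟩

lemma S1_eq_add_levelWeight (hS : SmallSteps S) :
    S1 d S w = levelWeight S w (-1) + levelWeight S w 0 + levelWeight S w 1 := by
  simpa [S1, levelWeight] using sum_mul_last hS w fun _ => 1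

lemma SbarC_eq (hS : SmallSteps S) (z : Fin (d + 1) → ℂ) :
    SbarC d S w z = QC d S w z + AC d S w z * z (Fin.last d) + BC d S w z * (z (Fin.last d))⁻¹ := by
  have := sum_weight_mul_prod_mul_last (w := w) hS (Fin.init z) fun m => z (Fin.last d) ^ (-m)
  simp only [neg_neg, zpow_one, neg_zero, zpow_zero, zpow_neg_one, mul_one] at this
  rw [add_comm (QC d S w z)]
  exact this

lemma norm_levelSum_le (hw : ∀ i ∈ S, 0 < w i) {u : Fin d → ℂ} (hu : ∀ j, ‖u j‖ = 1) (m : ℤ) :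
    ‖levelSum S w m u‖ ≤ levelWeight S w m := by
  refine (norm_sum_le _ _).trans (Finset.sum_le_sum fun i hi => ?_)
  rw [norm_mul, Complex.norm_real, Real.norm_of_nonneg (hw i (Finset.mem_of_mem_filter i hi)).le,
    norm_prod]
  simp [norm_zpow, hu]

/-- The product of the reflection kernels of the first `d` coordinates, shifted so as to vanish
outside of the orthant, and of the half-line weight in the last coordinate. -/
def walkKernel (S : Finset (Fin (d + 1) → ℤ)) (w : (Fin (d + 1) → ℤ) → ℝ) (n : ℕ)
    (x : Fin (d + 1) → ℤ) (u : Fin d → ℂ) : ℂ :=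
  (∏ j, reflectionKernel (x j.castSucc + 1) (u j)) *
    halfLineWeight (levelSum S w (-1) u) (levelSum S w 0 u) (levelSum S w 1 u) n (x (Fin.last d))

lemma sum_weight_mul_prod_reflectionKernel (hS : SmallSteps S)
    (hsym : ∀ k : Fin d, SymmetricAxis (d + 1) S w k.castSucc) {u : Fin d → ℂ} (hu : ∀ j, u j ≠ 0)
    {x : Fin (d + 1) → ℤ} (hx : 0 ≤ x) (g : ℤ → ℂ) :
    ∑ i ∈ S, (w i : ℂ) * ((∏ j, reflectionKernel (x j.castSucc + 1 + i j.castSucc) (u j)) *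
        g (i (Fin.last d))) =
      (∏ j, reflectionKernel (x j.castSucc + 1) (u j)) *
        ∑ i ∈ S, (w i : ℂ) * (∏ j, u j ^ i j.castSucc) * g (i (Fin.last d)) := by
  have key := sum_weight_mul_prod_congr (S := S) (w := w)
    (Fin.snoc (α := fun _ => ℤ → ℂ) (fun j q => reflectionKernel (x j.castSucc + 1 + q) (u j)) g)
    (Fin.snoc (α := fun _ => ℤ → ℂ)
      (fun j q => reflectionKernel (x j.castSucc + 1) (u j) * u j ^ q) g) fun k => by
    induction k using Fin.lastCases with
    | last => exact .inl (by simp only [Fin.snoc_last])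
    | cast k =>
      refine .inr ⟨hsym k, fun i hi => ?_⟩
      have eigen := reflectionKernel_add_one_add_sub_one (hu k) (p := x k.castSucc + 1)
        (by simpa using hx k.castSucc)
      simp only [Fin.snoc_castSucc]
      rcases hS i hi k.castSucc with h | h | h <;>
        simp only [h, neg_neg, neg_zero, add_zero, zpow_zero, zpow_one, zpow_neg_one, mul_one,
          ← sub_eq_add_neg]
      · linear_combination eigen
      · linear_combination eigen
  simp only [Fin.prod_univ_castSucc, Fin.snoc_castSucc, Fin.snoc_last,
    Finset.prod_mul_distrib] at key
  rw [key, Finset.mul_sum]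
  exact Finset.sum_congr rfl fun i _ => by ring

lemma walkKernel_succ (hS : SmallSteps S)
    (hsym : ∀ k : Fin d, SymmetricAxis (d + 1) S w k.castSucc) {u : Fin d → ℂ} (hu : ∀ j, u j ≠ 0)
    (n : ℕ) {x : Fin (d + 1) → ℤ} (hx : 0 ≤ x) :
    walkKernel S w (n + 1) x u = ∑ i ∈ S, (w i : ℂ) * walkKernel S w n (x + i) u := by
  set g : ℤ → ℂ := fun m => halfLineWeight (levelSum S w (-1) u) (levelSum S w 0 u)
    (levelSum S w 1 u) n (x (Fin.last d) + m) with hg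
  have := sum_weight_mul_prod_reflectionKernel hS hsym hu hx g
  rw [sum_weight_mul_prod_mul_last hS u g] at this
  simp only [walkKernel, Pi.add_apply, add_right_comm _ _ (1 : ℤ)]
  rw [this, halfLineWeight_succ _ _ _ _ (hx _)]
  simp only [hg, add_zero, sub_eq_add_neg]

lemma walkKernel_of_not_nonneg (n : ℕ) {x : Fin (d + 1) → ℤ} (hx : -1 ≤ x) (hx0 : ¬ 0 ≤ x)
    (u : Fin d → ℂ) : walkKernel S w n x u = 0 := by
  obtain ⟨k, hk⟩ : ∃ k, x k < 0 := by simpa [Pi.le_def] using hx0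
  rw [walkKernel]
  induction k using Fin.lastCases with
  | last => rw [halfLineWeight_of_neg _ _ _ _ hk, mul_zero]
  | cast k =>
    have : x k.castSucc + 1 = 0 := by linarith [show -1 ≤ x k.castSucc from hx k.castSucc]
    rw [Finset.prod_eq_zero (Finset.mem_univ k) (by rw [this, reflectionKernel_zero]), zero_mul]

lemma walkKernel_origin (n : ℕ) (u : Fin d → ℂ) :
    walkKernel S w n 0 u = (∏ j, (1 + u j)) *
      halfLineWeight (levelSum S w (-1) u) (levelSum S w 0 u) (levelSum S w 1 u) n 0 := by
  simp [walkKernel, reflectionKernel_one]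

end Levels

section Angles

/-- Lebesgue measure on an interval of angles of length `2 * π` which contains neighbourhoods of the
four angles `0`, `π / 2`, `π` and `3 * π / 2`. -/
def angleMeasure : Measure ℝ := volume.restrict (Set.Ioo (-(π / 4)) (7 * π / 4))

instance : IsFiniteMeasure angleMeasure := by
  unfold angleMeasure
  infer_instance

lemma pi_angleMeasure (d : ℕ) : (Measure.pi fun _ : Fin d => angleMeasure) =
    volume.restrict (Set.univ.pi fun _ => Set.Ioo (-(π / 4)) (7 * π / 4)) := by
  simp only [angleMeasure, ← Measure.restrict_pi_pi, volume_pi]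

lemma angleMeasure_real_univ : angleMeasure.real Set.univ = 2 * π := by
  rw [angleMeasure, measureReal_restrict_apply_univ, Real.volume_real_Ioo_of_le
    (by linarith [Real.pi_pos])]
  ring

lemma integrable_pi_angleMeasure {d : ℕ} {f : (Fin d → ℝ) → ℂ} (hf : Continuous f) :
    Integrable f (Measure.pi fun _ => angleMeasure) := by
  rw [pi_angleMeasure]
  exact (hf.continuousOn.integrableOn_compact (isCompact_univ_pi fun _ => isCompact_Icc)).mono_set
    (Set.pi_mono fun _ _ => Set.Ioo_subset_Icc_self)

lemma integral_angleMeasure_eq_circleAverage (f : ℂ → ℂ) (r : ℝ) :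
    ∫ φ : ℝ, f (r * Complex.exp (Complex.I * φ)) ∂angleMeasure =
      2 * π * Real.circleAverage f 0 r := by
  rw [Real.circleAverage_eq_integral_add (-(π / 4)),
    intervalIntegral.integral_comp_add_right fun φ => f (circleMap 0 r φ),
    show 0 + -(π / 4) = -(π / 4) by ring, show 2 * π + -(π / 4) = 7 * π / 4 by ring,
    intervalIntegral.integral_of_le (by linarith [Real.pi_pos]), integral_Ioc_eq_integral_Ioo,
    angleMeasure, Complex.real_smul]
  push_cast
  rw [mul_inv_cancel_left₀ (by exact_mod_cast Real.two_pi_pos.ne')]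
  simp only [circleMap, zero_add, mul_comm Complex.I]

lemma integral_pi_snoc {d : ℕ} {E : Type*} [NormedAddCommGroup E] [NormedSpace ℝ E]
    (μ : Measure ℝ) [SigmaFinite μ] {f : (Fin (d + 1) → ℝ) → E}
    (hf : Integrable f (Measure.pi fun _ => μ)) :
    ∫ θ, f θ ∂(Measure.pi fun _ => μ) =
      ∫ η, ∫ φ, f (Fin.snoc (α := fun _ => ℝ) η φ) ∂μ ∂(Measure.pi fun _ => μ) := by
  have split := (measurePreserving_piFinSuccAbove (fun _ : Fin (d + 1) => μ) (Fin.last d)).symm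
  have integrable := (split.integrable_comp_emb (MeasurableEquiv.measurableEmbedding _)).2 hf
  rw [Function.comp_def] at integrable
  rw [← split.integral_comp', integral_prod_symm _ integrable]
  simp [MeasurableEquiv.piFinSuccAbove, Fin.insertNthEquiv]

/-- The point of the torus with the given angles. -/
def torusPoint {d : ℕ} (θ : Fin d → ℝ) : Fin d → ℂ := fun j => Complex.exp (Complex.I * θ j)

lemma torusPoint_ne_zero {d : ℕ} (θ : Fin d → ℝ) (j : Fin d) : torusPoint θ j ≠ 0 :=
  Complex.exp_ne_zero _

lemma norm_torusPoint {d : ℕ} (θ : Fin d → ℝ) (j : Fin d) : ‖torusPoint θ j‖ = 1 :=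
  Complex.norm_exp_I_mul_ofReal _

lemma continuous_torusPoint {d : ℕ} : Continuous (torusPoint (d := d)) := by
  unfold torusPoint
  fun_prop

variable {d : ℕ} {S : Finset (Fin (d + 1) → ℤ)} {w : (Fin (d + 1) → ℤ) → ℝ}

lemma continuous_levelSum_torusPoint (m : ℤ) :
    Continuous fun θ => levelSum S w m (torusPoint θ) := by
  refine continuous_finsetSum _ fun i _ => continuous_const.mul <|
    continuous_finsetProd _ fun j _ => ?_
  exact ((continuous_apply j).comp continuous_torusPoint).zpow₀ _ fun θ =>
    .inl (torusPoint_ne_zero θ j)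

lemma integrable_walkKernel (n : ℕ) (x : Fin (d + 1) → ℤ) :
    Integrable (fun θ => walkKernel S w n x (torusPoint θ)) (Measure.pi fun _ => angleMeasure) := by
  refine integrable_pi_angleMeasure (Continuous.mul (continuous_finsetProd _ fun j _ =>
    continuous_finsetSum _ fun k _ => ?_) ?_)
  · exact ((continuous_apply j).comp continuous_torusPoint).zpow₀ _ fun θ =>
      .inl (torusPoint_ne_zero θ j)
  · exact continuous_halfLineWeight (continuous_levelSum_torusPoint _)
      (continuous_levelSum_torusPoint _) (continuous_levelSum_torusPoint _) _ _

lemma integral_prod_reflectionKernel {p : Fin d → ℤ} (hp : ∀ j, 1 ≤ p j) :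
    ∫ θ, ∏ j, reflectionKernel (p j) (torusPoint θ j) ∂(Measure.pi fun _ => angleMeasure) =
      (2 * π) ^ d := by
  have factor (j : Fin d) :
      ∫ φ : ℝ, reflectionKernel (p j) (Complex.exp (Complex.I * φ)) ∂angleMeasure = 2 * π := by
    simpa [circleAverage_reflectionKernel (hp j)] using
      integral_angleMeasure_eq_circleAverage (reflectionKernel (p j)) 1
  have := integral_fintype_prod_eq_prod (fun (j : Fin d) (φ : ℝ) =>
    reflectionKernel (p j) (Complex.exp (Complex.I * φ))) (μ := fun _ => angleMeasure)
  simpa [torusPoint, factor] using this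

lemma integral_walkKernel (hS : SmallSteps S)
    (hsym : ∀ k : Fin d, SymmetricAxis (d + 1) S w k.castSucc) (n : ℕ) {x : Fin (d + 1) → ℤ}
    (hx : -1 ≤ x) :
    ∫ θ, walkKernel S w n x (torusPoint θ) ∂(Measure.pi fun _ => angleMeasure) =
      (2 * π) ^ d * walkWeightFrom S w n x := by
  induction n generalizing x with
  | zero =>
    by_cases hx0 : 0 ≤ x
    swap
    · simp [walkKernel_of_not_nonneg 0 hx hx0, walkWeightFrom_of_not_nonneg 0 hx0]
    have : 0 ≤ x (Fin.last d) := hx0 _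
    simp only [walkKernel, halfLineWeight, this, if_true, mul_one, walkWeightFrom_zero hx0]
    rw [integral_prod_reflectionKernel fun j => by simpa using hx0 j.castSucc, Complex.ofReal_one,
      mul_one]
  | succ n ih =>
    by_cases hx0 : 0 ≤ x
    swap
    · simp [walkKernel_of_not_nonneg (n + 1) hx hx0, walkWeightFrom_of_not_nonneg (n + 1) hx0]
    have step_le {i : Fin (d + 1) → ℤ} (hi : i ∈ S) : -1 ≤ x + i := fun k => by
      have : 0 ≤ x k := hx0 k
      rcases hS i hi k with h | h | h <;> simp [h] <;> lia
    simp only [walkKernel_succ hS hsym (torusPoint_ne_zero _) n hx0, walkWeightFrom_succ n hx0]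
    rw [integral_finsetSum _ fun i _ => (integrable_walkKernel n (x + i)).const_mul _]
    push_cast
    rw [Finset.mul_sum]
    refine Finset.sum_congr rfl fun i hi => ?_
    rw [integral_const_mul, ih (step_le hi)]
    ring

end Angles

section Integrand

variable {d : ℕ} {S : Finset (Fin (d + 1) → ℤ)} {w : (Fin (d + 1) → ℤ) → ℝ} {ρ ε : ℝ}

/-- An integrand on `|z| = r < 1` whose mean is `halfLineWeight a q b n 0` for all values of `b`:
the kernel integrand has a pole at `b = 0`, and is replaced by the constant where `b` is small. -/
def halfLineIntegrand (ρ : ℝ) (n : ℕ) (a q b z : ℂ) : ℂ :=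
  if ‖b‖ < ρ then halfLineWeight a q b n 0 else
    halfLineKernel (a / b) 1 z * (q + a * z + b * z⁻¹) ^ n

lemma integral_halfLineIntegrand {r : ℝ} (h0 : 0 < r) (h1 : r < 1) (hρ : 0 < ρ) (n : ℕ)
    (a q b : ℂ) :
    ∫ φ : ℝ, halfLineIntegrand ρ n a q b (r * Complex.exp (Complex.I * φ)) ∂angleMeasure =
      2 * π * halfLineWeight a q b n 0 := by
  rw [integral_angleMeasure_eq_circleAverage]
  unfold halfLineIntegrand
  split_ifs with hb
  · rw [Real.circleAverage_const]
  · have hb0 : b ≠ 0 := norm_pos_iff.1 (hρ.trans_le (not_lt.1 hb))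
    rw [circleAverage_halfLineKernel_mul_pow h0 h1 a q hb0, Nat.cast_one, sub_self]

lemma norm_halfLineIntegrand_le_of_lt {b : ℂ} (hb : ‖b‖ < ρ) (n : ℕ) (a q z : ℂ) :
    ‖halfLineIntegrand ρ n a q b z‖ ≤ (‖a‖ + ‖q‖ + ‖b‖) ^ n := by
  rw [halfLineIntegrand, if_pos hb]
  exact norm_halfLineWeight_le a q b n 0

lemma norm_halfLineKernel_one_le {z : ℂ} (h0 : z ≠ 0) (h1 : ‖z‖ < 1) (c : ℂ) :
    ‖halfLineKernel c 1 z‖ ≤ (1 + ‖c‖) / (1 - ‖z‖) := by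
  have eq : halfLineKernel c 1 z = (1 - c * z ^ 2) / (1 - z) := by
    rw [halfLineKernel]
    field_simp
  have numerator_le : ‖1 - c * z ^ 2‖ ≤ 1 + ‖c‖ := by
    refine (norm_sub_le _ _).trans ?_
    rw [norm_one, norm_mul, norm_pow]
    gcongr
    exact mul_le_of_le_one_right (norm_nonneg c) (pow_le_one₀ (norm_nonneg z) h1.le)
  have le_denominator : 1 - ‖z‖ ≤ ‖1 - z‖ := by simpa using norm_sub_norm_le (1 : ℂ) z
  rw [eq, norm_div]
  gcongr

lemma norm_halfLineIntegrand_le_of_le (hρ : 0 < ρ) {b z : ℂ} (hb : ρ ≤ ‖b‖) (h0 : z ≠ 0)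
    (h1 : ‖z‖ < 1) (n : ℕ) (a q : ℂ) :
    ‖halfLineIntegrand ρ n a q b z‖ ≤
      (1 + ‖a‖ / ρ) / (1 - ‖z‖) * ‖q + a * z + b * z⁻¹‖ ^ n := by
  rw [halfLineIntegrand, if_neg hb.not_gt, norm_mul, norm_pow]
  have : 0 < 1 - ‖z‖ := by linarith
  gcongr
  refine (norm_halfLineKernel_one_le h0 h1 _).trans ?_
  rw [norm_div]
  gcongr

lemma measurable_halfLineIntegrand {X : Type*} [TopologicalSpace X] [MeasurableSpace X]
    [OpensMeasurableSpace X] {a q b z : X → ℂ} (ha : Continuous a) (hq : Continuous q)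
    (hb : Continuous b) (hz : Continuous z) (ρ : ℝ) (n : ℕ) :
    Measurable fun x => halfLineIntegrand ρ n (a x) (q x) (b x) (z x) := by
  have := (continuous_halfLineWeight ha hq hb n 0).measurable
  have := ha.measurable
  have := hq.measurable
  have := hb.measurable
  have := hz.measurable
  unfold halfLineIntegrand halfLineKernel
  refine Measurable.ite (measurableSet_lt hb.measurable.norm measurable_const) ‹_› ?_
  fun_prop

lemma zOf_castSucc (ε : ℝ) (θ : Fin (d + 1) → ℝ) (j : Fin d) :
    zOf d ε θ j.castSucc = Complex.exp (Complex.I * θ j.castSucc) := by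
  simp [zOf, Fin.castSucc_ne_last]

lemma zOf_last (ε : ℝ) (θ : Fin (d + 1) → ℝ) :
    zOf d ε θ (Fin.last d) = (1 - ε : ℝ) * Complex.exp (Complex.I * θ (Fin.last d)) := by
  simp [zOf]

lemma init_zOf (ε : ℝ) (θ : Fin (d + 1) → ℝ) :
    Fin.init (zOf d ε θ) = torusPoint (Fin.init θ) :=
  funext fun j => zOf_castSucc ε θ j

lemma norm_zOf_last (h1 : ε < 1) (θ : Fin (d + 1) → ℝ) : ‖zOf d ε θ (Fin.last d)‖ = 1 - ε := by
  rw [zOf_last, norm_mul, Complex.norm_exp_I_mul_ofReal, mul_one, Complex.norm_real,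
    Real.norm_of_nonneg (by linarith)]

lemma zOf_ne_zero (h1 : ε < 1) (θ : Fin (d + 1) → ℝ) (j : Fin (d + 1)) : zOf d ε θ j ≠ 0 := by
  induction j using Fin.lastCases with
  | last => exact norm_pos_iff.1 (by rw [norm_zOf_last h1]; linarith)
  | cast j => exact zOf_castSucc ε θ j ▸ Complex.exp_ne_zero _

lemma continuous_zOf (ε : ℝ) : Continuous (zOf d ε) := by
  unfold zOf
  fun_prop

/-- The residue integrand, modified as in `halfLineIntegrand` so that its integral over the whole
torus exists and represents the weight of the walks; the angle of `z_j` is the variable. -/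
def torusIntegrand (S : Finset (Fin (d + 1) → ℤ)) (w : (Fin (d + 1) → ℤ) → ℝ) (ρ : ℝ) (n : ℕ)
    (ε : ℝ) (θ : Fin (d + 1) → ℝ) : ℂ :=
  (∏ j, (1 + torusPoint (Fin.init θ) j)) * halfLineIntegrand ρ n (AC d S w (zOf d ε θ))
    (QC d S w (zOf d ε θ)) (BC d S w (zOf d ε θ)) (zOf d ε θ (Fin.last d))

lemma resIntegrand_eq (h0 : 0 < ε) (h1 : ε < 1) (hρ : 0 < ρ) (hS : SmallSteps S) (n : ℕ)
    {θ : Fin (d + 1) → ℝ} (hB : ρ ≤ ‖BC d S w (zOf d ε θ)‖) :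
    resIntegrand d S w n ε θ = Complex.I ^ (d + 1) * torusIntegrand S w ρ n ε θ := by
  have hb : BC d S w (zOf d ε θ) ≠ 0 := norm_pos_iff.1 (hρ.trans_le hB)
  have hz := zOf_ne_zero h1 θ (Fin.last d)
  have hz1 : 1 - zOf d ε θ (Fin.last d) ≠ 0 :=
    one_sub_ne_zero_of_mem_sphere (show 1 - ε < 1 by linarith) _
      (by simpa using norm_zOf_last h1 θ)
  have hprod : ∏ j, zOf d ε θ j ≠ 0 := Finset.prod_ne_zero_iff.2 fun j _ => zOf_ne_zero h1 θ j
  rw [torusIntegrand, halfLineIntegrand, if_neg hB.not_gt, resIntegrand, Finset.prod_mul_distrib,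
    Finset.prod_const, Finset.card_univ, Fintype.card_fin, halfLineKernel, ← SbarC_eq hS,
    ← init_zOf ε]
  simp only [Fin.init, pow_one]
  field_simp

lemma AC_zOf (ε : ℝ) (θ : Fin (d + 1) → ℝ) :
    AC d S w (zOf d ε θ) = levelSum S w (-1) (torusPoint (Fin.init θ)) := by
  rw [← init_zOf ε]
  rfl

lemma QC_zOf (ε : ℝ) (θ : Fin (d + 1) → ℝ) :
    QC d S w (zOf d ε θ) = levelSum S w 0 (torusPoint (Fin.init θ)) := by
  rw [← init_zOf ε]
  rfl

lemma BC_zOf (ε : ℝ) (θ : Fin (d + 1) → ℝ) :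
    BC d S w (zOf d ε θ) = levelSum S w 1 (torusPoint (Fin.init θ)) := by
  rw [← init_zOf ε]
  rfl

lemma norm_prod_one_add_torusPoint_le (θ : Fin d → ℝ) : ‖∏ j, (1 + torusPoint θ j)‖ ≤ 2 ^ d := by
  have factor_le (j : Fin d) : ‖1 + torusPoint θ j‖ ≤ 2 := by
    simpa [norm_torusPoint, one_add_one_eq_two] using norm_add_le (1 : ℂ) (torusPoint θ j)
  rw [norm_prod]
  exact (Finset.prod_le_prod (fun _ _ => norm_nonneg _) fun j _ => factor_le j).trans_eq (by simp)

lemma norm_torusIntegrand_le_of_lt (hw : ∀ i ∈ S, 0 < w i) (n : ℕ) {θ : Fin (d + 1) → ℝ}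
    (hB : ‖BC d S w (zOf d ε θ)‖ < ρ) :
    ‖torusIntegrand S w ρ n ε θ‖ ≤
      2 ^ d * (levelWeight S w (-1) + levelWeight S w 0 + ρ) ^ n := by
  rw [torusIntegrand, norm_mul]
  gcongr
  · exact norm_prod_one_add_torusPoint_le _
  · refine (norm_halfLineIntegrand_le_of_lt hB n _ _ _).trans ?_
    rw [AC_zOf, QC_zOf]
    gcongr <;> exact norm_levelSum_le hw (norm_torusPoint _) _

lemma norm_torusIntegrand_le_of_le (hS : SmallSteps S) (hw : ∀ i ∈ S, 0 < w i) (h0 : 0 < ε)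
    (h1 : ε < 1) (hρ : 0 < ρ) (n : ℕ) {θ : Fin (d + 1) → ℝ}
    (hB : ρ ≤ ‖BC d S w (zOf d ε θ)‖) :
    ‖torusIntegrand S w ρ n ε θ‖ ≤
      2 ^ d * ((1 + levelWeight S w (-1) / ρ) / ε * ‖SbarC d S w (zOf d ε θ)‖ ^ n) := by
  rw [torusIntegrand, norm_mul]
  gcongr
  · exact norm_prod_one_add_torusPoint_le _
  · have hz := norm_zOf_last h1 θ
    refine (norm_halfLineIntegrand_le_of_le hρ hB (zOf_ne_zero h1 θ _) (by linarith) n _ _).trans ?_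
    rw [← SbarC_eq hS, hz, sub_sub_cancel, AC_zOf]
    gcongr
    exact norm_levelSum_le hw (norm_torusPoint _) _

/-- The total weight of the steps at the point `(1, …, 1, 1 - ε)`, where `SbarC` takes its maximal
modulus over the torus. -/
def radialWeight (S : Finset (Fin (d + 1) → ℤ)) (w : (Fin (d + 1) → ℤ) → ℝ) (ε : ℝ) : ℝ :=
  ∑ i ∈ S, w i * (1 - ε) ^ (-i (Fin.last d))

lemma norm_SbarC_zOf_le (hw : ∀ i ∈ S, 0 < w i) (h1 : ε < 1) (θ : Fin (d + 1) → ℝ) :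
    ‖SbarC d S w (zOf d ε θ)‖ ≤ radialWeight S w ε := by
  refine (norm_sum_le _ _).trans_eq (Finset.sum_congr rfl fun i hi => ?_)
  simp only [norm_mul, norm_prod, norm_zpow, zOf_castSucc, Complex.norm_exp_I_mul_ofReal, one_zpow,
    Finset.prod_const_one, mul_one, norm_zOf_last h1, Complex.norm_real,
    Real.norm_of_nonneg (hw i hi).le]

lemma measurable_torusIntegrand (ρ : ℝ) (n : ℕ) (ε : ℝ) :
    Measurable (torusIntegrand S w ρ n ε) := by
  have continuous_init : Continuous fun θ : Fin (d + 1) → ℝ => torusPoint (Fin.init θ) :=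
    continuous_torusPoint.comp (continuous_pi fun j => continuous_apply _)
  have continuous_levelSum (m : ℤ) :
      Continuous fun θ : Fin (d + 1) → ℝ => levelSum S w m (torusPoint (Fin.init θ)) :=
    (continuous_levelSum_torusPoint m).comp (continuous_pi fun j => continuous_apply _)
  unfold torusIntegrand
  simp only [AC_zOf, QC_zOf, BC_zOf]
  exact (Continuous.measurable (by fun_prop)).mul (measurable_halfLineIntegrand
    (continuous_levelSum _) (continuous_levelSum _) (continuous_levelSum _)
    ((continuous_apply _).comp (continuous_zOf ε)) ρ n)

lemma norm_torusIntegrand_le (hS : SmallSteps S) (hw : ∀ i ∈ S, 0 < w i) (h0 : 0 < ε)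
    (h1 : ε < 1) (hρ : 0 < ρ) (n : ℕ) {θ : Fin (d + 1) → ℝ} {M : ℝ}
    (hM : ‖SbarC d S w (zOf d ε θ)‖ ≤ M) :
    ‖torusIntegrand S w ρ n ε θ‖ ≤ 2 ^ d * ((levelWeight S w (-1) + levelWeight S w 0 + ρ) ^ n +
      (1 + levelWeight S w (-1) / ρ) / ε * M ^ n) := by
  have := levelWeight_nonneg hw (-1)
  have := levelWeight_nonneg hw 0
  have := (norm_nonneg _).trans hM
  rcases lt_or_ge ‖BC d S w (zOf d ε θ)‖ ρ with hB | hB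
  · refine (norm_torusIntegrand_le_of_lt hw n hB).trans ?_
    gcongr
    exact le_add_of_nonneg_right (by positivity)
  · refine (norm_torusIntegrand_le_of_le hS hw h0 h1 hρ n hB).trans ?_
    gcongr
    exact le_add_of_nonneg_of_le (by positivity) (by gcongr)

lemma integrable_torusIntegrand (hS : SmallSteps S) (hw : ∀ i ∈ S, 0 < w i) (h0 : 0 < ε)
    (h1 : ε < 1) (hρ : 0 < ρ) (n : ℕ) :
    Integrable (torusIntegrand S w ρ n ε) (Measure.pi fun _ => angleMeasure) :=
  .of_bound (measurable_torusIntegrand ρ n ε).aestronglyMeasurable _ <| .of_forall fun θ =>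
    norm_torusIntegrand_le hS hw h0 h1 hρ n (norm_SbarC_zOf_le hw h1 θ)

lemma integral_torusIntegrand (hS : SmallSteps S) (hw : ∀ i ∈ S, 0 < w i)
    (hsym : ∀ k : Fin d, SymmetricAxis (d + 1) S w k.castSucc) (h0 : 0 < ε) (h1 : ε < 1)
    (hρ : 0 < ρ) (n : ℕ) :
    ∫ θ, torusIntegrand S w ρ n ε θ ∂(Measure.pi fun _ => angleMeasure) =
      (2 * π) ^ (d + 1) * walkWeight (d + 1) S w n := by
  have inner (η : Fin d → ℝ) :
      ∫ φ, torusIntegrand S w ρ n ε (Fin.snoc (α := fun _ => ℝ) η φ) ∂angleMeasure =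
        2 * π * walkKernel S w n 0 (torusPoint η) := by
    simp only [torusIntegrand, AC_zOf, QC_zOf, BC_zOf, Fin.init_snoc, zOf_last, Fin.snoc_last]
    rw [integral_const_mul, integral_halfLineIntegrand (by linarith) (by linarith) hρ,
      walkKernel_origin]
    ring
  rw [integral_pi_snoc _ (integrable_torusIntegrand hS hw h0 h1 hρ n)]
  simp only [inner]
  rw [integral_const_mul, integral_walkKernel hS hsym n (by simp),
    walkWeightFrom_origin]
  ring

end Integrand

section Gap

variable {E : Type*} [NormedAddCommGroup E] [InnerProductSpace ℝ E]

lemma norm_add_le_two_sub {u v : E} (hu : ‖u‖ = 1) (hv : ‖v‖ = 1) :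
    ‖u + v‖ ≤ 2 - ‖u - v‖ ^ 2 / 4 := by
  have parallelogram := parallelogram_law_with_norm ℝ u v
  rw [hu, hv] at parallelogram
  have : ‖u - v‖ ^ 2 ≤ 4 := by nlinarith [norm_nonneg (u + v)]
  exact le_of_sq_le_sq (by nlinarith [sq_nonneg (‖u - v‖ ^ 2)]) (by linarith)

lemma norm_smul_add_smul_le {u v : E} (hu : ‖u‖ = 1) (hv : ‖v‖ = 1) {c r s : ℝ} (hc : 0 ≤ c)
    (hr : c ≤ r) (hs : c ≤ s) : ‖r • u + s • v‖ ≤ r + s - c / 4 * ‖u - v‖ ^ 2 := by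
  have split : r • u + s • v = (r - c) • u + (s - c) • v + c • (u + v) := by module
  calc ‖r • u + s • v‖ ≤ ‖(r - c) • u‖ + ‖(s - c) • v‖ + ‖c • (u + v)‖ :=
        split ▸ norm_add₃_le
    _ = (r - c) + (s - c) + c * ‖u + v‖ := by
        rw [norm_smul_of_nonneg (sub_nonneg.2 hr), norm_smul_of_nonneg (sub_nonneg.2 hs),
          norm_smul_of_nonneg hc, hu, hv, mul_one, mul_one]
    _ ≤ (r - c) + (s - c) + c * (2 - ‖u - v‖ ^ 2 / 4) := by
        gcongr
        exact norm_add_le_two_sub hu hv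
    _ = r + s - c / 4 * ‖u - v‖ ^ 2 := by ring

lemma norm_sum_smul_le {ι : Type*} {T : Finset ι} {r : ι → ℝ} {u : ι → E}
    (hr : ∀ l ∈ T, 0 ≤ r l) (hu : ∀ l, ‖u l‖ = 1) : ‖∑ l ∈ T, r l • u l‖ ≤ ∑ l ∈ T, r l :=
  (norm_sum_le _ _).trans_eq <| Finset.sum_congr rfl fun l hl => by
    rw [norm_smul_of_nonneg (hr l hl), hu, mul_one]

lemma norm_sum_smul_le_sub {ι : Type*} {T : Finset ι} {r : ι → ℝ} {u : ι → E} {c : ℝ}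
    (hc : 0 ≤ c) (hr : ∀ l ∈ T, c ≤ r l) (hu : ∀ l, ‖u l‖ = 1) {i k : ι} (hi : i ∈ T)
    (hk : k ∈ T) :
    ‖∑ l ∈ T, r l • u l‖ ≤ ∑ l ∈ T, r l - c / 4 * ‖u i - u k‖ ^ 2 := by
  have hr0 : ∀ l ∈ T, 0 ≤ r l := fun l hl => hc.trans (hr l hl)
  obtain rfl | hik := eq_or_ne i k
  · simpa using norm_sum_smul_le hr0 hu
  have hk' : k ∈ T.erase i := Finset.mem_erase.2 ⟨hik.symm, hk⟩
  have rest := norm_sum_smul_le (T := (T.erase i).erase k)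
    (fun l hl => hr0 l (Finset.mem_of_mem_erase (Finset.mem_of_mem_erase hl))) hu
  have pair := norm_smul_add_smul_le (hu i) (hu k) hc (hr i hi) (hr k hk)
  simp only [← Finset.add_sum_erase _ _ hi, ← Finset.add_sum_erase _ _ hk', ← add_assoc]
  linarith [norm_add_le (r i • u i + r k • u k) (∑ l ∈ (T.erase i).erase k, r l • u l)]

end Gap

section StepAngle

variable {d : ℕ} {S : Finset (Fin (d + 1) → ℤ)} {w : (Fin (d + 1) → ℤ) → ℝ}

/-- The argument of the monomial of the step `i` in `SbarC` at a point whose coordinates have the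
arguments `x`, which are real numbers or real numbers modulo `2 * π`. -/
def stepAngle {G : Type*} [AddCommGroup G] (x : Fin (d + 1) → G) (i : Fin (d + 1) → ℤ) : G :=
  ∑ j : Fin d, i j.castSucc • x j.castSucc - i (Fin.last d) • x (Fin.last d)

lemma map_stepAngle {G H : Type*} [AddCommGroup G] [AddCommGroup H] (f : G →+ H)
    (x : Fin (d + 1) → G) (i : Fin (d + 1) → ℤ) :
    f (stepAngle x i) = stepAngle (fun j => f (x j)) i := by
  simp [stepAngle]

lemma stepAngle_sub_update {G : Type*} [AddCommGroup G] (x : Fin (d + 1) → G)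
    (i : Fin (d + 1) → ℤ) (k : Fin d) :
    stepAngle x i - stepAngle x (Function.update i k.castSucc (-i k.castSucc)) =
      (2 * i k.castSucc) • x k.castSucc := by
  simp only [stepAngle, Function.update_of_ne (Fin.castSucc_ne_last k).symm,
    sub_sub_sub_cancel_right, ← Finset.sum_sub_distrib, ← sub_smul]
  rw [Finset.sum_eq_single k]
  · rw [Function.update_self, sub_neg_eq_add, two_mul]
  · intro j _ hj
    rw [Function.update_of_ne (by simpa using hj), sub_self, zero_smul]
  · simp

variable {G : Type*} [SeminormedAddCommGroup G] {x y : Fin (d + 1) → G} {i : Fin (d + 1) → ℤ}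
  {η : ℝ}

lemma norm_zsmul_le_of_small {m : ℤ} (hm : m = -1 ∨ m = 0 ∨ m = 1) (a : G) : ‖m • a‖ ≤ ‖a‖ := by
  rcases hm with rfl | rfl | rfl <;> simp

lemma norm_stepAngle_sub_le (hi : ∀ j, i j = -1 ∨ i j = 0 ∨ i j = 1) :
    ‖stepAngle x i - stepAngle y i‖ ≤ ∑ j, ‖x j - y j‖ := by
  have linear : stepAngle x i - stepAngle y i =
      ∑ j : Fin d, i j.castSucc • (x j.castSucc - y j.castSucc) -
        i (Fin.last d) • (x (Fin.last d) - y (Fin.last d)) := by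
    simp only [stepAngle, smul_sub, Finset.sum_sub_distrib]
    abel
  rw [linear, Fin.sum_univ_castSucc]
  refine (norm_sub_le _ _).trans (add_le_add ?_ (norm_zsmul_le_of_small (hi _) _))
  exact (norm_sum_le _ _).trans (Finset.sum_le_sum fun j _ => norm_zsmul_le_of_small (hi _) _)

lemma norm_two_nsmul_castSucc_le (hsym : ∀ k : Fin d, SymmetricAxis (d + 1) S w k.castSucc)
    (hfwd : ∀ k : Fin (d + 1), ∃ i ∈ S, i k = 1)
    (hη : ∀ i ∈ S, ∀ k ∈ S, ‖stepAngle x i - stepAngle x k‖ ≤ η) (j : Fin d) :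
    ‖2 • x j.castSucc‖ ≤ η := by
  obtain ⟨i, hi, hij⟩ := hfwd j.castSucc
  have := hη i hi _ (hsym j i hi).1
  rw [stepAngle_sub_update, hij] at this
  exact_mod_cast this

lemma norm_four_nsmul_last_le (hS : SmallSteps S)
    (hsym : ∀ k : Fin d, SymmetricAxis (d + 1) S w k.castSucc)
    (hfwd : ∀ k : Fin (d + 1), ∃ i ∈ S, i k = 1) (hback : ∃ k ∈ S, k (Fin.last d) = -1)
    (hη : ∀ i ∈ S, ∀ k ∈ S, ‖stepAngle x i - stepAngle x k‖ ≤ η) :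
    ‖4 • x (Fin.last d)‖ ≤ 2 * (d + 1) * η := by
  obtain ⟨i, hi, hil⟩ := hfwd (Fin.last d)
  obtain ⟨k, hk, hkl⟩ := hback
  have double : 4 • x (Fin.last d) = 2 • (stepAngle x k - stepAngle x i) -
      ∑ j : Fin d, (k j.castSucc • (2 • x j.castSucc) - i j.castSucc • (2 • x j.castSucc)) := by
    simp only [stepAngle, hil, hkl, smul_comm _ 2, Finset.sum_sub_distrib, ← Finset.smul_sum]
    module
  have term_le (j : Fin d) :
      ‖k j.castSucc • (2 • x j.castSucc) - i j.castSucc • (2 • x j.castSucc)‖ ≤ η + η := by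
    have := norm_two_nsmul_castSucc_le hsym hfwd hη j
    refine (norm_sub_le _ _).trans (add_le_add ?_ ?_) <;>
      exact (norm_zsmul_le_of_small (hS _ ‹_› _) _).trans this
  calc ‖4 • x (Fin.last d)‖
      ≤ 2 * ‖stepAngle x k - stepAngle x i‖ + ∑ _j : Fin d, (η + η) := by
        rw [double]
        refine (norm_sub_le _ _).trans (add_le_add ?_ ?_)
        · simpa using norm_nsmul_le (n := 2) (a := stepAngle x k - stepAngle x i)
        · exact (norm_sum_le _ _).trans (Finset.sum_le_sum fun j _ => term_le j)
    _ ≤ 2 * η + ∑ _j : Fin d, (η + η) := by gcongr; exact hη k hk i hi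
    _ = 2 * (d + 1) * η := by simp; ring

end StepAngle

section AngleCircle

lemma norm_exp_sub_exp (a b : ℝ) :
    ‖Complex.exp (Complex.I * a) - Complex.exp (Complex.I * b)‖ =
      ‖Complex.exp (Complex.I * (a - b : ℝ)) - 1‖ := by
  have factor : Complex.exp (Complex.I * a) - Complex.exp (Complex.I * b) =
      Complex.exp (Complex.I * b) * (Complex.exp (Complex.I * (a - b : ℝ)) - 1) := by
    rw [mul_sub, ← Complex.exp_add, mul_one]
    push_cast
    ring_nf
  rw [factor, norm_mul, Complex.norm_exp_I_mul_ofReal, one_mul]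

lemma norm_exp_sub_exp_le (a b : ℝ) :
    ‖Complex.exp (Complex.I * a) - Complex.exp (Complex.I * b)‖ ≤ |a - b| :=
  (norm_exp_sub_exp a b).trans_le Real.norm_exp_I_mul_ofReal_sub_one_le

lemma mul_norm_coe_le_norm_exp_sub_one (a : ℝ) :
    2 / π * ‖(a : AddCircle (2 * π))‖ ≤ ‖Complex.exp (Complex.I * a) - 1‖ := by
  set k := round ((2 * π)⁻¹ * a)
  set t := a - k * (2 * π) with ht
  have norm_eq : ‖(a : AddCircle (2 * π))‖ = |t| := AddCircle.norm_eq _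
  have abs_le : |t| ≤ π := by
    have := AddCircle.norm_le_half_period (2 * π) Real.two_pi_pos.ne' (x := a)
    rwa [norm_eq, abs_of_pos Real.two_pi_pos, mul_div_cancel_left₀ _ two_ne_zero] at this
  have exp_eq : Complex.exp (Complex.I * a) = Complex.exp (Complex.I * t) := by
    rw [← Complex.exp_periodic.int_mul k (Complex.I * t), ht]
    congr 1
    push_cast
    ring
  have sin_bound := Real.mul_abs_le_abs_sin (x := t / 2)
    (by rw [abs_div, abs_two]; exact div_le_div_of_nonneg_right abs_le zero_le_two)
  rw [norm_eq, exp_eq, Complex.norm_exp_I_mul_ofReal_sub_one, norm_mul, Real.norm_ofNat,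
    Real.norm_eq_abs]
  rw [abs_div, abs_two] at sin_bound
  linarith

lemma eq_zero_of_nsmul_eq_zero_of_mul_norm_lt {p : ℝ} [Fact (0 < p)] {u : AddCircle p} {n : ℕ}
    (hn : 0 < n) (hu : n • u = 0) (hlt : n * ‖u‖ < p) : u = 0 := by
  by_contra h
  have order_le := AddCircle.le_add_order_smul_norm_of_isOfFinAddOrder
    (isOfFinAddOrder_iff_nsmul_eq_zero.2 ⟨n, hn, hu⟩) h
  have : (addOrderOf u : ℝ) ≤ n := by
    exact_mod_cast Nat.le_of_dvd hn (addOrderOf_dvd_of_nsmul_eq_zero hu)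
  rw [nsmul_eq_mul] at order_le
  exact absurd (order_le.trans (mul_le_mul_of_nonneg_right this (norm_nonneg u))) hlt.not_ge

lemma exists_abs_sub_le_of_norm_nsmul_le {p : ℕ} (h0 : 0 < p) (h4 : p ≤ 4) {θ κ : ℝ}
    (hθ : θ ∈ Set.Ioo (-(π / 4)) (7 * π / 4)) (hκ : κ ≤ p * π / 4)
    (h : ‖p • (θ : AddCircle (2 * π))‖ ≤ κ) : ∃ k < p, |θ - 2 * π * k / p| ≤ κ / p := by
  have hp : (0 : ℝ) < p := Nat.cast_pos.2 h0
  have hp4 : (p : ℝ) ≤ 4 := by exact_mod_cast h4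
  have := Real.pi_pos
  obtain ⟨k, hk⟩ : ∃ k : ℤ, |p * θ - k * (2 * π)| ≤ κ :=
    ⟨_, by rwa [← AddCircle.coe_nsmul, AddCircle.norm_eq, nsmul_eq_mul] at h⟩
  have close := abs_le.1 hk
  have lower : (-1 : ℝ) < k := by
    by_contra! h
    nlinarith [mul_le_mul_of_nonneg_right h Real.two_pi_pos.le, mul_lt_mul_of_pos_left hθ.1 hp,
      mul_le_mul_of_nonneg_right hp4 Real.pi_pos.le]
  have upper : (k : ℝ) < p := by
    by_contra! h
    nlinarith [mul_le_mul_of_nonneg_right h Real.two_pi_pos.le, mul_lt_mul_of_pos_left hθ.2 hp]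
  lift k to ℕ using by
    have : -1 < k := by exact_mod_cast lower
    lia
  have scaled : |θ - 2 * π * k / p| * p = |p * θ - (k : ℤ) * (2 * π)| := by
    rw [← abs_of_pos hp, ← abs_mul, abs_of_pos hp, sub_mul, div_mul_cancel₀ _ hp.ne', mul_comm θ,
      mul_comm (2 * π), Int.cast_natCast]
  exact ⟨k, by exact_mod_cast upper, (le_div_iff₀ hp).2 (scaled.trans_le hk)⟩

end AngleCircle

section ContributingPoints

variable {d : ℕ} {S : Finset (Fin (d + 1) → ℤ)} {w : (Fin (d + 1) → ℤ) → ℝ}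
  {m : Fin (d + 1) → Fin 4} {θ : Fin (d + 1) → ℝ} {δ ε : ℝ}

lemma zOf_zero_argOf (m : Fin (d + 1) → Fin 4) : zOf d 0 (argOf d m) = wOf d m := by
  funext j
  simp only [zOf, wOf, argOf, Complex.ofReal_zero, sub_zero, ite_self, one_mul]
  conv_rhs => rw [← Complex.exp_pi_div_two_mul_I, ← Complex.exp_nat_mul]
  congr 1
  push_cast
  ring

lemma norm_wOf (m : Fin (d + 1) → Fin 4) (j : Fin (d + 1)) : ‖wOf d m j‖ = 1 := by
  simp [wOf]

lemma SbarC_zOf (ε : ℝ) (θ : Fin (d + 1) → ℝ) :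
    SbarC d S w (zOf d ε θ) =
      ∑ i ∈ S, (w i * (1 - ε) ^ (-i (Fin.last d))) • Complex.exp (Complex.I * stepAngle θ i) := by
  refine Finset.sum_congr rfl fun i _ => ?_
  simp only [zOf_castSucc, zOf_last, mul_zpow, ← Complex.exp_int_mul, ← Complex.exp_sum]
  rw [stepAngle, Complex.real_smul, mul_left_comm _ (_ ^ _), mul_assoc, ← Complex.exp_add,
    mul_left_comm, ← mul_assoc]
  push_cast
  congr 2
  simp only [zsmul_eq_mul, mul_sub, Finset.mul_sum, mul_left_comm Complex.I]
  ring

lemma norm_SC_wOf (hm : ∀ j : Fin d, m j.castSucc = 0 ∨ m j.castSucc = 2) :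
    ‖SC d S w (wOf d m)‖ = ‖SbarC d S w (wOf d m)‖ := by
  have real (j : Fin d) : (starRingEnd ℂ) (wOf d m j.castSucc) = wOf d m j.castSucc := by
    rcases hm j with h | h <;> simp [wOf, h]
  have unimodular : (starRingEnd ℂ) (wOf d m (Fin.last d)) = (wOf d m (Fin.last d))⁻¹ :=
    (Complex.inv_eq_conj (norm_wOf m _)).symm
  have conj : SC d S w (wOf d m) = (starRingEnd ℂ) (SbarC d S w (wOf d m)) := by
    rw [SC, SbarC, map_sum]
    refine Finset.sum_congr rfl fun i _ => ?_
    simp only [Fin.prod_univ_castSucc, map_mul, map_prod, map_zpow₀, real, unimodular,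
      Complex.conj_ofReal, inv_zpow', neg_neg, mul_assoc]
  rw [conj, RCLike.norm_conj]

lemma mem_GammaIdx_iff :
    m ∈ GammaIdx d S w ↔ (∀ j : Fin d, m j.castSucc = 0 ∨ m j.castSucc = 2) ∧
      ‖SbarC d S w (wOf d m)‖ = S1 d S w := by
  rw [GammaIdx, Finset.mem_filter_univ]
  refine and_congr_right fun hm => ?_
  rw [norm_div, norm_mul, norm_prod, norm_SC_wOf hm]
  simp [norm_wOf]

lemma exp_eq_exp_of_coe_eq_coe {a b : ℝ} (h : (a : AddCircle (2 * π)) = b) :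
    Complex.exp (Complex.I * a) = Complex.exp (Complex.I * b) := by
  have circle : Circle.exp a = Circle.exp b := congrArg Real.Angle.toCircle h
  simpa only [Circle.coe_exp, mul_comm] using congrArg (fun z : Circle => (z : ℂ)) circle

lemma coe_stepAngle (θ : Fin (d + 1) → ℝ) (i : Fin (d + 1) → ℤ) :
    ((stepAngle θ i : ℝ) : AddCircle (2 * π)) = stepAngle (fun j => (θ j : AddCircle (2 * π))) i :=
  map_stepAngle (QuotientAddGroup.mk' (AddSubgroup.zmultiples (2 * π))) θ i

lemma mem_GammaIdx_of_stepAngle_eq (hw : ∀ i ∈ S, 0 < w i)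
    (hm : ∀ j : Fin d, m j.castSucc = 0 ∨ m j.castSucc = 2) {i₀ : Fin (d + 1) → ℤ}
    (h : ∀ i ∈ S, stepAngle (fun j => (argOf d m j : AddCircle (2 * π))) i =
      stepAngle (fun j => (argOf d m j : AddCircle (2 * π))) i₀) :
    m ∈ GammaIdx d S w := by
  refine mem_GammaIdx_iff.2 ⟨hm, ?_⟩
  have aligned : SbarC d S w (wOf d m) =
      S1 d S w • Complex.exp (Complex.I * stepAngle (argOf d m) i₀) := by
    rw [← zOf_zero_argOf, SbarC_zOf, S1, Finset.sum_smul]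
    refine Finset.sum_congr rfl fun i hi => ?_
    rw [exp_eq_exp_of_coe_eq_coe (b := stepAngle (argOf d m) i₀), sub_zero, one_zpow, mul_one]
    rw [coe_stepAngle, coe_stepAngle, h i hi]
  have S1_nonneg : 0 ≤ S1 d S w := Finset.sum_nonneg fun i hi => (hw i hi).le
  rw [aligned, norm_smul_of_nonneg S1_nonneg, Complex.norm_exp_I_mul_ofReal, mul_one]

lemma four_nsmul_stepAngle_argOf (m : Fin (d + 1) → Fin 4) (i : Fin (d + 1) → ℤ) :
    4 • stepAngle (fun j => (argOf d m j : AddCircle (2 * π))) i = 0 := by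
  have four_nsmul (j : Fin (d + 1)) : 4 • (argOf d m j : AddCircle (2 * π)) = 0 := by
    rw [← AddCircle.coe_nsmul, AddCircle.coe_eq_zero_iff]
    refine ⟨(m j : ℕ), ?_⟩
    rw [argOf, zsmul_eq_mul, nsmul_eq_mul]
    push_cast
    ring
  simp only [stepAngle, smul_sub, Finset.smul_sum, smul_comm 4, four_nsmul, smul_zero,
    Finset.sum_const_zero, sub_zero]

lemma exists_abs_sub_argOf_le (hS : SmallSteps S)
    (hsym : ∀ k : Fin d, SymmetricAxis (d + 1) S w k.castSucc)
    (hfwd : ∀ k : Fin (d + 1), ∃ i ∈ S, i k = 1) (hback : ∃ k ∈ S, k (Fin.last d) = -1)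
    (hθ : ∀ j, θ j ∈ Set.Ioo (-(π / 4)) (7 * π / 4)) {η : ℝ} (hη1 : (d + 1) * η ≤ π / 2)
    (hη : ∀ i ∈ S, ∀ k ∈ S, ‖stepAngle (fun j => (θ j : AddCircle (2 * π))) i -
      stepAngle (fun j => (θ j : AddCircle (2 * π))) k‖ ≤ η) :
    ∃ m : Fin (d + 1) → Fin 4, (∀ j : Fin d, m j.castSucc = 0 ∨ m j.castSucc = 2) ∧
      (∀ j : Fin d, |θ j.castSucc - argOf d m j.castSucc| ≤ η / 2) ∧
      |θ (Fin.last d) - argOf d m (Fin.last d)| ≤ (d + 1) * η / 2 := by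
  obtain ⟨i₀, hi₀, -⟩ := hfwd (Fin.last d)
  have hη0 : 0 ≤ η := (norm_nonneg _).trans (hη i₀ hi₀ i₀ hi₀)
  have hd : 0 ≤ (d : ℝ) * η := by positivity
  have half_turn (j : Fin d) := exists_abs_sub_le_of_norm_nsmul_le (p := 2) two_pos (by norm_num)
    (hθ j.castSucc) (by push_cast; linarith) (norm_two_nsmul_castSucc_le hsym hfwd hη j)
  choose k hk2 hk using half_turn
  obtain ⟨l, hl4, hl⟩ := exists_abs_sub_le_of_norm_nsmul_le (p := 4) four_pos le_rfl
    (hθ (Fin.last d)) (by push_cast; linarith) (norm_four_nsmul_last_le hS hsym hfwd hback hη)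
  refine ⟨Fin.snoc (α := fun _ => Fin 4) (fun j => ⟨2 * k j, by have := hk2 j; lia⟩) ⟨l, hl4⟩,
    fun j => ?_, fun j => ?_, ?_⟩
  · rw [Fin.snoc_castSucc]
    have : k j = 0 ∨ k j = 1 := by
      have := hk2 j
      lia
    exact this.imp (fun h => Fin.ext (by simp [h])) fun h => Fin.ext (by simp [h])
  · have := hk j
    rw [argOf, Fin.snoc_castSucc]
    push_cast at this ⊢
    rwa [show (2 : ℝ) * k j * π / 2 = 2 * π * k j / 2 by ring]
  · rw [argOf, Fin.snoc_last]
    push_cast at hl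
    rw [show (l : ℝ) * π / 2 = 2 * π * l / 4 by ring]
    linarith

lemma stepAngle_argOf_eq {i k : Fin (d + 1) → ℤ} (hi : ∀ j, i j = -1 ∨ i j = 0 ∨ i j = 1)
    (hk : ∀ j, k j = -1 ∨ k j = 0 ∨ k j = 1) {x : Fin (d + 1) → AddCircle (2 * π)}
    (h : ‖stepAngle x i - stepAngle x k‖ + 2 * ∑ j, ‖x j - argOf d m j‖ < π / 2) :
    stepAngle (fun j => (argOf d m j : AddCircle (2 * π))) i =
      stepAngle (fun j => (argOf d m j : AddCircle (2 * π))) k := by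
  set y : Fin (d + 1) → AddCircle (2 * π) := fun j => argOf d m j
  have : Fact (0 < 2 * π) := ⟨Real.two_pi_pos⟩
  refine sub_eq_zero.1 <| eq_zero_of_nsmul_eq_zero_of_mul_norm_lt four_pos ?_ ?_
  · rw [smul_sub, four_nsmul_stepAngle_argOf, four_nsmul_stepAngle_argOf, sub_zero]
  · have triangle : ‖stepAngle y i - stepAngle y k‖ ≤ ‖stepAngle x i - stepAngle x k‖ +
        ‖stepAngle x k - stepAngle y k‖ + ‖stepAngle x i - stepAngle y i‖ := by
      rw [show stepAngle y i - stepAngle y k = stepAngle x i - stepAngle x k +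
        (stepAngle x k - stepAngle y k) - (stepAngle x i - stepAngle y i) by abel]
      exact (norm_sub_le _ _).trans (add_le_add_left (norm_add_le _ _) _)
    have hi' : ‖stepAngle x i - stepAngle y i‖ ≤ ∑ j, ‖x j - y j‖ := norm_stepAngle_sub_le hi
    have hk' : ‖stepAngle x k - stepAngle y k‖ ≤ ∑ j, ‖x j - y j‖ := norm_stepAngle_sub_le hk
    push_cast
    linarith

lemma mem_Nparam (hS : SmallSteps S) (hw : ∀ i ∈ S, 0 < w i)
    (hsym : ∀ k : Fin d, SymmetricAxis (d + 1) S w k.castSucc)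
    (hfwd : ∀ k : Fin (d + 1), ∃ i ∈ S, i k = 1) (hback : ∃ k ∈ S, k (Fin.last d) = -1)
    (hθ : ∀ j, θ j ∈ Set.Ioo (-(π / 4)) (7 * π / 4)) (hδ0 : 0 < δ) (hδ : δ ≤ 1 / 2)
    (hη : ∀ i ∈ S, ∀ k ∈ S, ‖stepAngle (fun j => (θ j : AddCircle (2 * π))) i -
      stepAngle (fun j => (θ j : AddCircle (2 * π))) k‖ ≤ δ / (d + 1)) :
    θ ∈ Nparam d S w δ := by
  have hd : (d + 1) * (δ / (d + 1)) = δ := mul_div_cancel₀ _ (by positivity)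
  have hη_le : δ / (d + 1) ≤ δ := div_le_self hδ0.le (by simp)
  have hη_pos : 0 < δ / (d + 1) := by positivity
  have := Real.pi_gt_three
  obtain ⟨m, hm, near, near_last⟩ := exists_abs_sub_argOf_le hS hsym hfwd hback hθ
    (by linarith) hη
  rw [hd] at near_last
  refine Set.mem_biUnion (x := m) ?_ fun j _ => ?_
  · obtain ⟨i₀, hi₀, -⟩ := hfwd (Fin.last d)
    have sum_le : ∑ j, ‖(θ j : AddCircle (2 * π)) - argOf d m j‖ ≤ δ := by
      calc ∑ j, ‖(θ j : AddCircle (2 * π)) - argOf d m j‖ ≤ ∑ j, |θ j - argOf d m j| :=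
            Finset.sum_le_sum fun j _ => QuotientAddGroup.norm_mk_le_norm
        _ ≤ ∑ _j : Fin d, δ / (d + 1) / 2 + δ / 2 := by
            rw [Fin.sum_univ_castSucc]
            gcongr with j
            exact near j
        _ ≤ δ := by
            rw [Finset.sum_const, Finset.card_univ, Fintype.card_fin, nsmul_eq_mul]
            linarith
    exact mem_GammaIdx_of_stepAngle_eq hw hm fun i hi =>
      stepAngle_argOf_eq (x := fun j => (θ j : AddCircle (2 * π))) (hS i hi) (hS i₀ hi₀)
        (by linarith [hη i hi i₀ hi₀])
  · have : |θ j - argOf d m j| < δ := by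
      induction j using Fin.lastCases with
      | last => exact near_last.trans_lt (by linarith)
      | cast j => exact (near j).trans_lt (by linarith)
    constructor <;> linarith [abs_lt.1 this]

lemma norm_SbarC_zOf_le_of_lt_norm_stepAngle_sub (h0 : 0 < ε) (h1 : ε ≤ 1 / 2) {c : ℝ}
    (hc : 0 ≤ c) (hcw : ∀ i ∈ S, c ≤ w i) (hS : SmallSteps S) {i k : Fin (d + 1) → ℤ}
    (hi : i ∈ S) (hk : k ∈ S) {η : ℝ} (hη : 0 ≤ η)
    (h : η < ‖stepAngle (fun j => (θ j : AddCircle (2 * π))) i -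
      stepAngle (fun j => (θ j : AddCircle (2 * π))) k‖) :
    ‖SbarC d S w (zOf d ε θ)‖ ≤ radialWeight S w ε - c / 32 * η ^ 2 := by
  have half_le {l : Fin (d + 1) → ℤ} (hl : l ∈ S) : c / 2 ≤ w l * (1 - ε) ^ (-l (Fin.last d)) := by
    have : 1 / 2 ≤ (1 - ε) ^ (-l (Fin.last d)) := by
      have : 1 ≤ (1 - ε)⁻¹ := (one_le_inv₀ (by linarith)).2 (by linarith)
      rcases hS l hl (Fin.last d) with h | h | h <;> norm_num [h, zpow_neg_one] <;> linarith
    nlinarith [hcw l hl]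
  have chord : η / 2 ≤ ‖Complex.exp (Complex.I * stepAngle θ i) -
      Complex.exp (Complex.I * stepAngle θ k)‖ := by
    have := mul_norm_coe_le_norm_exp_sub_one (stepAngle θ i - stepAngle θ k)
    rw [AddCircle.coe_sub, coe_stepAngle, coe_stepAngle, ← norm_exp_sub_exp] at this
    have half : 1 / 2 ≤ 2 / π := by
      rw [div_le_div_iff₀ two_pos Real.pi_pos]
      linarith [Real.pi_le_four]
    nlinarith [mul_le_mul half h.le hη (by positivity)]
  rw [SbarC_zOf]
  refine (norm_sum_smul_le_sub (by positivity : 0 ≤ c / 2) (fun l hl => half_le hl)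
    (fun l => Complex.norm_exp_I_mul_ofReal _) hi hk).trans ?_
  have := mul_le_mul_of_nonneg_left (pow_le_pow_left₀ (by positivity) chord 2)
    (by positivity : 0 ≤ c / 2 / 4)
  rw [radialWeight]
  linarith

lemma radialWeight_le (hS : SmallSteps S) (hb : 0 ≤ levelWeight S w 1)
    (hdrift : levelWeight S w 1 ≤ levelWeight S w (-1)) (h0 : 0 ≤ ε) (h1 : ε ≤ 1 / 2) :
    radialWeight S w ε ≤ S1 d S w + 2 * levelWeight S w 1 * ε ^ 2 := by
  have inv_le : (1 - ε)⁻¹ ≤ 1 + ε + 2 * ε ^ 2 := by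
    rw [inv_le_iff_one_le_mul₀ (by linarith)]
    nlinarith [mul_nonneg (sq_nonneg ε) (by linarith : 0 ≤ 1 - 2 * ε)]
  have split : radialWeight S w ε = levelWeight S w (-1) * (1 - ε) + levelWeight S w 0 +
      levelWeight S w 1 * (1 - ε)⁻¹ := by
    simpa [radialWeight, levelWeight] using sum_mul_last hS w fun m => (1 - ε) ^ (-m)
  rw [split, S1_eq_add_levelWeight hS]
  nlinarith [mul_le_mul_of_nonneg_left inv_le hb, mul_le_mul_of_nonneg_right hdrift h0]

lemma norm_SbarC_zOf_le_of_notMem_Nparam (hS : SmallSteps S) (hw : ∀ i ∈ S, 0 < w i)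
    (hsym : ∀ k : Fin d, SymmetricAxis (d + 1) S w k.castSucc)
    (hfwd : ∀ k : Fin (d + 1), ∃ i ∈ S, i k = 1) (hback : ∃ k ∈ S, k (Fin.last d) = -1)
    (h0 : 0 < ε) (h1 : ε ≤ 1 / 2) {c : ℝ} (hc : 0 ≤ c) (hcw : ∀ i ∈ S, c ≤ w i)
    (hθ : ∀ j, θ j ∈ Set.Ioo (-(π / 4)) (7 * π / 4)) (hδ0 : 0 < δ) (hδ : δ ≤ 1 / 2)
    (hθN : θ ∉ Nparam d S w δ) :
    ‖SbarC d S w (zOf d ε θ)‖ ≤ radialWeight S w ε - c / 32 * (δ / (d + 1)) ^ 2 := by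
  by_contra! hlt
  refine hθN (mem_Nparam hS hw hsym hfwd hback hθ hδ0 hδ fun i hi k hk => ?_)
  by_contra! h
  exact hlt.not_ge (norm_SbarC_zOf_le_of_lt_norm_stepAngle_sub h0 h1 hc hcw hS hi hk
    (by positivity) h)

lemma norm_levelSum_torusPoint_sub_le (hS : SmallSteps S) (hw : ∀ i ∈ S, 0 < w i) (l : ℤ)
    (φ ψ : Fin d → ℝ) :
    ‖levelSum S w l (torusPoint φ) - levelSum S w l (torusPoint ψ)‖ ≤
      levelWeight S w l * ∑ j, |φ j - ψ j| := by
  rw [levelSum, levelSum, ← Finset.sum_sub_distrib, levelWeight, Finset.sum_mul]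
  refine (norm_sum_le _ _).trans (Finset.sum_le_sum fun i hi => ?_)
  have hiS := Finset.mem_of_mem_filter i hi
  have monomial (χ : Fin d → ℝ) : ∏ j, torusPoint χ j ^ i j.castSucc =
      Complex.exp (Complex.I * (∑ j, i j.castSucc * χ j : ℝ)) := by
    simp only [torusPoint, ← Complex.exp_int_mul, ← Complex.exp_sum]
    push_cast
    simp only [Finset.mul_sum, mul_left_comm Complex.I]
  rw [← mul_sub, norm_mul, Complex.norm_real, Real.norm_of_nonneg (hw i hiS).le, monomial,
    monomial]
  gcongr
  · exact (hw i hiS).le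
  refine (norm_exp_sub_exp_le _ _).trans ?_
  rw [← Finset.sum_sub_distrib]
  refine (Finset.abs_sum_le_sum_abs _ _).trans (Finset.sum_le_sum fun j _ => ?_)
  rw [← mul_sub, abs_mul]
  refine mul_le_of_le_one_left (abs_nonneg _) ?_
  rcases hS i hiS j.castSucc with h | h | h <;> simp [h]

lemma levelWeight_one_le_norm_BC_wOf (hS : SmallSteps S) (hw : ∀ i ∈ S, 0 < w i)
    (hm : m ∈ GammaIdx d S w) : levelWeight S w 1 ≤ ‖BC d S w (wOf d m)‖ := by
  have total := (mem_GammaIdx_iff.1 hm).2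
  rw [SbarC_eq hS, S1_eq_add_levelWeight hS] at total
  have triangle := norm_add₃_le (a := QC d S w (wOf d m))
    (b := AC d S w (wOf d m) * wOf d m (Fin.last d))
    (c := BC d S w (wOf d m) * (wOf d m (Fin.last d))⁻¹)
  rw [total, norm_mul, norm_mul, norm_inv, norm_wOf, inv_one, mul_one, mul_one] at triangle
  have hA : ‖AC d S w (wOf d m)‖ ≤ levelWeight S w (-1) :=
    norm_levelSum_le hw (fun j => norm_wOf m j.castSucc) (-1)
  have hQ : ‖QC d S w (wOf d m)‖ ≤ levelWeight S w 0 :=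
    norm_levelSum_le hw (fun j => norm_wOf m j.castSucc) 0
  linarith

lemma half_levelWeight_one_le_norm_BC_zOf (hS : SmallSteps S) (hw : ∀ i ∈ S, 0 < w i)
    (hm : m ∈ GammaIdx d S w) (hδ : d * δ ≤ 1 / 2) (hθ : θ ∈ box d m δ) (ε : ℝ) :
    levelWeight S w 1 / 2 ≤ ‖BC d S w (zOf d ε θ)‖ := by
  have center := levelWeight_one_le_norm_BC_wOf hS hw hm
  have lipschitz := norm_levelSum_torusPoint_sub_le hS hw 1 (Fin.init (argOf d m)) (Fin.init θ)
  rw [← BC_zOf 0, zOf_zero_argOf, ← BC_zOf ε] at lipschitz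
  have sum_le : ∑ j, |Fin.init (argOf d m) j - Fin.init θ j| ≤ 1 / 2 := by
    refine (Finset.sum_le_sum (g := fun _ => δ) fun j _ => ?_).trans (by simpa using hδ)
    have := hθ j.castSucc (Set.mem_univ _)
    exact abs_le.2 ⟨by simp only [Fin.init]; linarith [this.2],
      by simp only [Fin.init]; linarith [this.1]⟩
  have := norm_sub_norm_le (BC d S w (wOf d m)) (BC d S w (zOf d ε θ))
  linarith [mul_le_mul_of_nonneg_left sum_le (levelWeight_nonneg hw 1)]

end ContributingPoints

section ErrorTerm

lemma superpolynomialDecay_pow {r : ℝ} (hr : |r| < 1) :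
    Asymptotics.SuperpolynomialDecay atTop (fun n : ℕ => (n : ℝ)) fun n => r ^ n :=
  fun m => tendsto_pow_const_mul_const_pow_of_abs_lt_one m hr

lemma superpolynomialDecay_rpow_mul_exp_neg_mul_rpow (s : ℝ) {c γ : ℝ} (hc : 0 < c) (hγ : 0 < γ) :
    Asymptotics.SuperpolynomialDecay atTop (fun n : ℕ => (n : ℝ))
      fun n => (n : ℝ) ^ s * Real.exp (-c * (n : ℝ) ^ γ) := by
  intro m
  refine ((tendsto_rpow_mul_exp_neg_mul_atTop_nhds_zero ((m + s) / γ) c hc).comp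
    ((tendsto_rpow_atTop hγ).comp tendsto_natCast_atTop_atTop)).congr' ?_
  filter_upwards [eventually_gt_atTop 0] with n hn
  have hn' : (0 : ℝ) < n := Nat.cast_pos.2 hn
  simp only [Function.comp_apply]
  rw [← Real.rpow_mul hn'.le, mul_div_cancel₀ _ hγ.ne', Real.rpow_add hn', Real.rpow_natCast,
    mul_assoc]

lemma tendsto_natCast_rpow_neg {s : ℝ} (hs : 0 < s) :
    Tendsto (fun n : ℕ => (n : ℝ) ^ (-s)) atTop (nhds 0) :=
  (tendsto_rpow_neg_atTop hs).comp tendsto_natCast_atTop_atTop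

lemma natCast_mul_rpow_neg_sq {n : ℕ} (hn : 0 < n) (s : ℝ) :
    (n : ℝ) * ((n : ℝ) ^ (-s)) ^ 2 = (n : ℝ) ^ (1 - 2 * s) := by
  have hn' : (0 : ℝ) < n := Nat.cast_pos.2 hn
  calc (n : ℝ) * ((n : ℝ) ^ (-s)) ^ 2 = (n : ℝ) ^ (1 : ℝ) * (n : ℝ) ^ (-s * 2) := by
        rw [Real.rpow_one, Real.rpow_mul hn'.le, Real.rpow_two]
    _ = (n : ℝ) ^ (1 - 2 * s) := by
        rw [← Real.rpow_add hn']
        ring_nf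

lemma eventually_mul_sub_mul_le {α β : ℝ} (h : β < α) (a : ℝ) {b : ℝ} (hb : 0 < b) :
    ∀ᶠ n : ℕ in atTop, n * (a * ((n : ℝ) ^ (-α)) ^ 2 - b * ((n : ℝ) ^ (-β)) ^ 2) ≤
      -(b / 2) * (n : ℝ) ^ (1 - 2 * β) := by
  have lim := (tendsto_natCast_rpow_neg (by linarith : 0 < 2 * (α - β))).const_mul a
  rw [mul_zero] at lim
  filter_upwards [eventually_gt_atTop 0, lim.eventually_le_const (half_pos hb)] with n hn small
  have hn' : (0 : ℝ) < n := Nat.cast_pos.2 hn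
  have split : (n : ℝ) ^ (1 - 2 * α) = (n : ℝ) ^ (-(2 * (α - β))) * (n : ℝ) ^ (1 - 2 * β) := by
    rw [← Real.rpow_add hn']
    ring_nf
  rw [mul_sub, mul_left_comm, mul_left_comm _ b, natCast_mul_rpow_neg_sq hn,
    natCast_mul_rpow_neg_sq hn, split]
  nlinarith [mul_le_mul_of_nonneg_right small (Real.rpow_nonneg hn'.le (1 - 2 * β))]

lemma superpolynomialDecay_rpow_mul_exp {α β : ℝ} (hβ : β < 1 / 2) (hβα : β < α) (a : ℝ) {b : ℝ}
    (hb : 0 < b) :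
    Asymptotics.SuperpolynomialDecay atTop (fun n : ℕ => (n : ℝ)) fun n =>
      (n : ℝ) ^ α * Real.exp (n * (a * ((n : ℝ) ^ (-α)) ^ 2 - b * ((n : ℝ) ^ (-β)) ^ 2)) := by
  refine (superpolynomialDecay_rpow_mul_exp_neg_mul_rpow α (half_pos hb)
    (by linarith : 0 < 1 - 2 * β)).trans_eventually_abs_le ?_
  filter_upwards [eventually_mul_sub_mul_le hβα a hb] with n exponent_le
  simp only [Function.comp_apply]
  rw [abs_of_nonneg (by positivity), abs_of_nonneg (by positivity)]
  gcongr

lemma norm_integral_sub_setIntegral_le {X E : Type*} [MeasurableSpace X] [NormedAddCommGroup E]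
    [NormedSpace ℝ E] {μ : Measure X} [IsFiniteMeasure μ] {f : X → E} {s : Set X} {C : ℝ}
    (hs : MeasurableSet s) (hf : Integrable f μ) (hC : 0 ≤ C) (h : ∀ᵐ x ∂μ, x ∉ s → ‖f x‖ ≤ C) :
    ‖∫ x, f x ∂μ - ∫ x in s, f x ∂μ‖ ≤ C * μ.real Set.univ := by
  rw [← integral_add_compl hs hf, add_sub_cancel_left]
  refine (norm_setIntegral_le_of_norm_le_const_ae' (measure_lt_top μ _) h).trans ?_
  exact mul_le_mul_of_nonneg_left (measureReal_mono (Set.subset_univ _)) hC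

end ErrorTerm

section Assembly

variable {d : ℕ} {S : Finset (Fin (d + 1) → ℤ)} {w : (Fin (d + 1) → ℤ) → ℝ} {ρ ε δ : ℝ}

lemma measurableSet_box (m : Fin (d + 1) → Fin 4) (δ : ℝ) : MeasurableSet (box d m δ) :=
  MeasurableSet.univ_pi fun _ => measurableSet_Ioo

lemma box_subset_univ_pi_Ioo (hδ : δ ≤ π / 4) (m : Fin (d + 1) → Fin 4) :
    box d m δ ⊆ Set.univ.pi fun _ => Set.Ioo (-(π / 4)) (7 * π / 4) := by
  refine Set.pi_mono fun j _ => Set.Ioo_subset_Ioo ?_ ?_ <;> rw [argOf]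
  · have : 0 ≤ (m j : ℕ) * π / 2 := by positivity
    linarith
  · have : ((m j : ℕ) : ℝ) ≤ 3 := mod_cast Nat.le_of_lt_succ (m j).isLt
    linarith [mul_le_mul_of_nonneg_right this Real.pi_pos.le]

lemma pairwise_disjoint_box (hδ : δ ≤ π / 4) (T : Set (Fin (d + 1) → Fin 4)) :
    T.Pairwise (Function.onFun Disjoint fun m => box d m δ) := by
  intro m _ k _ hne
  refine Set.disjoint_left.2 fun θ hm hk => hne (funext fun j => Fin.ext ?_)
  have hmj := hm j (Set.mem_univ _)
  have hkj := hk j (Set.mem_univ _)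
  rw [Set.mem_Ioo, argOf] at hmj hkj
  have lt : ((m j : ℕ) : ℝ) < (k j : ℕ) + 1 := by
    refine lt_of_mul_lt_mul_right ?_ Real.pi_div_two_pos.le
    linarith
  have gt : ((k j : ℕ) : ℝ) < (m j : ℕ) + 1 := by
    refine lt_of_mul_lt_mul_right ?_ Real.pi_div_two_pos.le
    linarith
  norm_cast at lt gt
  lia

lemma resIntegral_eq (hS : SmallSteps S) (h0 : 0 < ε) (h1 : ε < 1) (hρ : 0 < ρ) (n : ℕ)
    {m : Fin (d + 1) → Fin 4} (hδ : δ ≤ π / 4)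
    (hB : ∀ θ ∈ box d m δ, ρ ≤ ‖BC d S w (zOf d ε θ)‖) :
    resIntegral d S w n ε δ m = Complex.I ^ (d + 1) *
      ∫ θ in box d m δ, torusIntegrand S w ρ n ε θ ∂(Measure.pi fun _ => angleMeasure) := by
  rw [pi_angleMeasure, Measure.restrict_restrict_of_subset (box_subset_univ_pi_Ioo hδ m),
    ← integral_const_mul]
  exact setIntegral_congr_fun (measurableSet_box m δ) fun θ hθ =>
    resIntegrand_eq h0 h1 hρ hS n (hB θ hθ)

lemma sum_resIntegral_eq (hS : SmallSteps S) (hw : ∀ i ∈ S, 0 < w i)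
    (hb : 0 < levelWeight S w 1) (h0 : 0 < ε) (h1 : ε < 1) (hδ : δ ≤ π / 4)
    (hdδ : d * δ ≤ 1 / 2) (n : ℕ) :
    ∑ m ∈ GammaIdx d S w, ((2 * (π : ℂ) * Complex.I) ^ (d + 1))⁻¹ * resIntegral d S w n ε δ m =
      ((2 * (π : ℂ)) ^ (d + 1))⁻¹ * ∫ θ in Nparam d S w δ,
        torusIntegrand S w (levelWeight S w 1 / 2) n ε θ ∂(Measure.pi fun _ => angleMeasure) := by
  have integrable := integrable_torusIntegrand hS hw h0 h1 (half_pos hb) n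
  rw [Nparam, integral_biUnion_finset _ (fun m _ => measurableSet_box m δ)
    (pairwise_disjoint_box hδ _) fun m _ => integrable.integrableOn, Finset.mul_sum]
  refine Finset.sum_congr rfl fun m hm => ?_
  rw [resIntegral_eq hS h0 h1 (half_pos hb) n hδ fun θ hθ =>
    half_levelWeight_one_le_norm_BC_zOf hS hw hm hdδ hθ ε, mul_pow _ Complex.I, mul_inv, mul_assoc,
    inv_mul_cancel_left₀ (pow_ne_zero _ Complex.I_ne_zero)]

lemma norm_walkWeight_sub_sum_resIntegral_le (hS : SmallSteps S) (hw : ∀ i ∈ S, 0 < w i)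
    (hsym : ∀ k : Fin d, SymmetricAxis (d + 1) S w k.castSucc) (hb : 0 < levelWeight S w 1)
    (h0 : 0 < ε) (h1 : ε < 1) (hδ : δ ≤ π / 4) (hdδ : d * δ ≤ 1 / 2) (n : ℕ) {C : ℝ} (hC : 0 ≤ C)
    (hbound : ∀ θ : Fin (d + 1) → ℝ, (∀ j, θ j ∈ Set.Ioo (-(π / 4)) (7 * π / 4)) →
      θ ∉ Nparam d S w δ → ‖torusIntegrand S w (levelWeight S w 1 / 2) n ε θ‖ ≤ C) :
    ‖(walkWeight (d + 1) S w n : ℂ) - ∑ m ∈ GammaIdx d S w,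
      ((2 * (π : ℂ) * Complex.I) ^ (d + 1))⁻¹ * resIntegral d S w n ε δ m‖ ≤ C := by
  have walk := integral_torusIntegrand hS hw hsym h0 h1 (half_pos hb) n
  rw [← inv_mul_eq_iff_eq_mul₀ (by simp [Real.pi_ne_zero])] at walk
  have off_boxes : ∀ᵐ θ ∂(Measure.pi fun _ : Fin (d + 1) => angleMeasure), θ ∉ Nparam d S w δ →
      ‖torusIntegrand S w (levelWeight S w 1 / 2) n ε θ‖ ≤ C := by
    rw [pi_angleMeasure, ae_restrict_iff' (MeasurableSet.univ_pi fun _ => measurableSet_Ioo)]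
    exact .of_forall fun θ hθ => hbound θ fun j => hθ j (Set.mem_univ j)
  have measurable_Nparam : MeasurableSet (Nparam d S w δ) :=
    Finset.measurableSet_biUnion _ fun m _ => measurableSet_box m δ
  have difference := norm_integral_sub_setIntegral_le measurable_Nparam
    (integrable_torusIntegrand hS hw h0 h1 (half_pos hb) n) hC off_boxes
  have volume_torus :
      (Measure.pi fun _ : Fin (d + 1) => angleMeasure).real Set.univ = (2 * π) ^ (d + 1) := by
    rw [measureReal_def, Measure.pi_univ, Finset.prod_const, ENNReal.toReal_pow, ← measureReal_def,
      angleMeasure_real_univ, Finset.card_univ, Fintype.card_fin]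
  have norm_two_pi : ‖2 * (π : ℂ)‖ = 2 * π := by simp [Real.pi_pos.le]
  rw [volume_torus] at difference
  rw [sum_resIntegral_eq hS hw hb h0 h1 hδ hdδ n, ← walk, ← mul_sub, norm_mul, norm_inv, norm_pow,
    norm_two_pi]
  exact (inv_mul_le_iff₀' (by positivity)).2 difference

lemma levelWeight_one_pos (hw : ∀ i ∈ S, 0 < w i) (hfwd : ∃ i ∈ S, i (Fin.last d) = 1) :
    0 < levelWeight S w 1 := by
  obtain ⟨i, hi, hi1⟩ := hfwd
  exact hi1 ▸ levelWeight_pos hw hi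

lemma levelWeight_one_le_S1 (hS : SmallSteps S) (hw : ∀ i ∈ S, 0 < w i) :
    levelWeight S w 1 ≤ S1 d S w := by
  linarith [S1_eq_add_levelWeight (w := w) hS, levelWeight_nonneg hw 0,
    levelWeight_nonneg hw (-1)]

lemma abs_one_sub_half_levelWeight_one_div_S1_lt_one (hS : SmallSteps S) (hw : ∀ i ∈ S, 0 < w i)
    (hb : 0 < levelWeight S w 1) : |1 - levelWeight S w 1 / 2 / S1 d S w| < 1 := by
  have hb_le := levelWeight_one_le_S1 hS hw
  have hS1 := hb.trans_le hb_le
  have pos := div_pos (half_pos hb) hS1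
  have lt_one := (div_lt_one hS1).2 ((half_lt_self hb).trans_le hb_le)
  exact abs_lt.2 ⟨by linarith, by linarith⟩

lemma norm_SbarC_zOf_le_S1_mul_exp (hS : SmallSteps S) (hw : ∀ i ∈ S, 0 < w i)
    (hsym : ∀ k : Fin d, SymmetricAxis (d + 1) S w k.castSucc)
    (hfwd : ∀ k : Fin (d + 1), ∃ i ∈ S, i k = 1)
    (hdrift : levelWeight S w 1 ≤ levelWeight S w (-1)) (h0 : 0 < ε) (h1 : ε ≤ 1 / 2) {c : ℝ}
    (hc : 0 ≤ c) (hcw : ∀ i ∈ S, c ≤ w i) (hδ0 : 0 < δ) (hδ : δ ≤ 1 / 2) {θ : Fin (d + 1) → ℝ}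
    (hθ : ∀ j, θ j ∈ Set.Ioo (-(π / 4)) (7 * π / 4)) (hθN : θ ∉ Nparam d S w δ) :
    ‖SbarC d S w (zOf d ε θ)‖ ≤ S1 d S w * Real.exp
      (2 * levelWeight S w 1 / S1 d S w * ε ^ 2 - c / (32 * (d + 1) ^ 2 * S1 d S w) * δ ^ 2) := by
  have hb := levelWeight_one_pos hw (hfwd _)
  have hback : ∃ k ∈ S, k (Fin.last d) = -1 := by
    obtain ⟨k, hk, -⟩ := Finset.exists_ne_zero_of_sum_ne_zero (hb.trans_le hdrift).ne'
    exact ⟨k, Finset.mem_filter.1 hk⟩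
  have hS1 := hb.trans_le (levelWeight_one_le_S1 hS hw)
  calc ‖SbarC d S w (zOf d ε θ)‖ ≤ radialWeight S w ε - c / 32 * (δ / (d + 1)) ^ 2 :=
        norm_SbarC_zOf_le_of_notMem_Nparam hS hw hsym hfwd hback h0 h1 hc hcw hθ hδ0 hδ hθN
    _ ≤ S1 d S w + 2 * levelWeight S w 1 * ε ^ 2 - c / 32 * (δ / (d + 1)) ^ 2 := by
        gcongr
        exact radialWeight_le hS hb.le hdrift h0.le h1
    _ = S1 d S w * (2 * levelWeight S w 1 / S1 d S w * ε ^ 2 -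
          c / (32 * (d + 1) ^ 2 * S1 d S w) * δ ^ 2 + 1) := by
        field_simp
        ring
    _ ≤ _ := by
        gcongr
        exact Real.add_one_le_exp _

lemma norm_walkWeight_sub_sum_resIntegral_le_S1_pow_mul (hS : SmallSteps S)
    (hw : ∀ i ∈ S, 0 < w i) (hsym : ∀ k : Fin d, SymmetricAxis (d + 1) S w k.castSucc)
    (hfwd : ∀ k : Fin (d + 1), ∃ i ∈ S, i k = 1)
    (hdrift : levelWeight S w 1 ≤ levelWeight S w (-1)) (h0 : 0 < ε) (h1 : ε ≤ 1 / 2) {c : ℝ}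
    (hc : 0 ≤ c) (hcw : ∀ i ∈ S, c ≤ w i) (hδ0 : 0 < δ) (hδ : (d + 1) * δ ≤ 1 / 2) (n : ℕ) :
    ‖(walkWeight (d + 1) S w n : ℂ) - ∑ m ∈ GammaIdx d S w,
      ((2 * (π : ℂ) * Complex.I) ^ (d + 1))⁻¹ * resIntegral d S w n ε δ m‖ ≤
      S1 d S w ^ n * (2 ^ d * ((1 - levelWeight S w 1 / 2 / S1 d S w) ^ n +
        (1 + levelWeight S w (-1) / (levelWeight S w 1 / 2)) * (ε⁻¹ * Real.exp (n *
          (2 * levelWeight S w 1 / S1 d S w * ε ^ 2 -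
            c / (32 * (d + 1) ^ 2 * S1 d S w) * δ ^ 2))))) := by
  have hb := levelWeight_one_pos hw (hfwd _)
  have hb_le := levelWeight_one_le_S1 hS hw
  have hS1 := hb.trans_le hb_le
  have hdδ : 0 ≤ d * δ := by positivity
  have := levelWeight_nonneg hw (-1)
  have base : levelWeight S w (-1) + levelWeight S w 0 + levelWeight S w 1 / 2 =
      S1 d S w * (1 - levelWeight S w 1 / 2 / S1 d S w) := by
    rw [mul_one_sub, mul_div_cancel₀ _ hS1.ne', S1_eq_add_levelWeight hS]
    ring
  have base_nonneg : 0 ≤ 1 - levelWeight S w 1 / 2 / S1 d S w := by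
    rw [sub_nonneg, div_le_one hS1]
    linarith
  refine norm_walkWeight_sub_sum_resIntegral_le hS hw hsym hb h0 (by linarith)
    (by linarith [Real.pi_gt_three]) (by linarith) n (by positivity) fun θ hθ hθN => ?_
  refine (norm_torusIntegrand_le hS hw h0 (by linarith) (half_pos hb) n
    (norm_SbarC_zOf_le_S1_mul_exp hS hw hsym hfwd hdrift h0 h1 hc hcw hδ0 (by linarith) hθ
      hθN)).trans_eq ?_
  rw [base, mul_pow, mul_pow, ← Real.exp_nat_mul]
  ring

end Assembly

end ZeroDrift

theorem residue_representation_general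
    (d : ℕ) (S : Finset (Fin (d + 1) → ℤ)) (w : (Fin (d + 1) → ℤ) → ℝ)
    (hstep : ZeroDrift.SmallSteps S)
    (hw : ∀ i ∈ S, 0 < w i)
    (hsym : ∀ k : Fin d, SymmetricAxis (d + 1) S w (Fin.castSucc k))
    (hfwd : ∀ k : Fin (d + 1), ∃ i ∈ S, i k = 1)
    (hdrift : (∑ i ∈ S.filter fun i => i (Fin.last d) = 1, w i)
        ≤ ∑ i ∈ S.filter fun i => i (Fin.last d) = -1, w i)
    (α β : ℝ) (hβ0 : 0 < β) (hβ : β < 1 / 2) (hβα : β < α) :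
    ∃ e : ℕ → ℝ,
      (∀ m : ℕ, Tendsto (fun n : ℕ => (n : ℝ) ^ m * e n) atTop (nhds 0)) ∧
      ∀ᶠ n : ℕ in atTop,
        ‖(walkWeight (d + 1) S w n : ℂ) -
            ∑ m ∈ ZeroDrift.GammaIdx d S w,
              ((2 * (π : ℂ) * Complex.I) ^ (d + 1))⁻¹ *
                ZeroDrift.resIntegral d S w n ((n : ℝ) ^ (-α)) ((n : ℝ) ^ (-β)) m‖
          ≤ ZeroDrift.S1 d S w ^ n * e n := by
  obtain ⟨i₀, hi₀, -⟩ := hfwd (Fin.last d)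
  obtain ⟨k, hk, w_min⟩ := S.exists_min_image w ⟨i₀, hi₀⟩
  have hb := ZeroDrift.levelWeight_one_pos hw (hfwd _)
  have hS1 := hb.trans_le (ZeroDrift.levelWeight_one_le_S1 hstep hw)
  have gain_pos : 0 < w k / (32 * (d + 1) ^ 2 * ZeroDrift.S1 d S w) :=
    div_pos (hw k hk) (by positivity)
  have error_decay := ((ZeroDrift.superpolynomialDecay_pow
    (ZeroDrift.abs_one_sub_half_levelWeight_one_div_S1_lt_one hstep hw hb)).add
    ((ZeroDrift.superpolynomialDecay_rpow_mul_exp hβ hβα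
      (2 * ZeroDrift.levelWeight S w 1 / ZeroDrift.S1 d S w) gain_pos).const_mul
      (1 + ZeroDrift.levelWeight S w (-1) / (ZeroDrift.levelWeight S w 1 / 2)))).const_mul (2 ^ d)
  refine ⟨_, error_decay, ?_⟩
  filter_upwards [eventually_gt_atTop 0,
    (ZeroDrift.tendsto_natCast_rpow_neg (hβ0.trans hβα)).eventually_le_const one_half_pos,
    ((ZeroDrift.tendsto_natCast_rpow_neg hβ0).const_mul ((d : ℝ) + 1)).eventually_le_const
      (by simp : ((d : ℝ) + 1) * 0 < 1 / 2)] with n hn hε hδ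
  have hn' : (0 : ℝ) < n := Nat.cast_pos.2 hn
  have bound := ZeroDrift.norm_walkWeight_sub_sum_resIntegral_le_S1_pow_mul hstep hw hsym hfwd
    hdrift (Real.rpow_pos_of_pos hn' _) hε (hw k hk).le w_min (Real.rpow_pos_of_pos hn' _) hδ n
  rwa [← Real.rpow_neg hn'.le, neg_neg] at bound

/-- Proposition (residue representation): `s_n` equals the sum over `w ∈ Γ` of the
residue integrals over `N_w`, up to an error `O(S(1)^n e_n)` with `e_n` decaying
faster than any fixed power of `n`. -/
theorem residue_representation
    (d : ℕ) (S : Finset (Fin (d + 1) → ℤ)) (w : (Fin (d + 1) → ℤ) → ℝ)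
    (hstep : ∀ i ∈ S, (∀ j, i j = -1 ∨ i j = 0 ∨ i j = 1) ∧ i ≠ 0)
    (hw : ∀ i ∈ S, 0 < w i)
    (hsym : ∀ k : Fin d, SymmetricAxis (d + 1) S w (Fin.castSucc k))
    (hfwd : ∀ k : Fin (d + 1), ∃ i ∈ S, i k = 1)
    (hbwd : ∀ k : Fin (d + 1), ∃ i ∈ S, i k = -1)
    (hzero : (∑ i ∈ S.filter fun i => i (Fin.last d) = -1, w i)
        = ∑ i ∈ S.filter fun i => i (Fin.last d) = 1, w i)
    (α β : ℝ) (hα : 1 / 2 < α) (hαβ : α < 2 * β) (hsum : 1 < α + β)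
    (hβ1 : 1 / 3 < β) (hβ2 : β < 1 / 2) :
    ∃ e : ℕ → ℝ,
      (∀ m : ℕ, Tendsto (fun n : ℕ => (n : ℝ) ^ m * e n) atTop (nhds 0)) ∧
      ∀ᶠ n : ℕ in atTop,
        ‖(walkWeight (d + 1) S w n : ℂ) -
            ∑ m ∈ ZeroDrift.GammaIdx d S w,
              ((2 * (π : ℂ) * Complex.I) ^ (d + 1))⁻¹ *
                ZeroDrift.resIntegral d S w n ((n : ℝ) ^ (-α)) ((n : ℝ) ^ (-β)) m‖
          ≤ ZeroDrift.S1 d S w ^ n * e n :=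
  residue_representation_general d S w (fun i hi => (hstep i hi).1) hw hsym hfwd hzero.ge α β
    (by linarith) hβ2 (by linarith)

end
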